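/- arXiv:1202.0909 — 4 statements merged into one kernel-verified Lean document; each statement's English description precedes it below -/
import Mathlib

section
/- Let d ≥ 2 be an integer and b ∈ (0,∞). There exists a constant C, depending only on d and b, such that for all integers n ≥ d and m ≥ 2 satisfying n/m ≤ b, the standardized number W_{n,m} of urns containing exactly d balls in the uniform occupancy model satisfies sup_{z ∈ ℝ} |P(W_{n,m} ≤ z) − P(Z ≤ z)| ≤ C / σ_{n,m}. -/
open MeasureTheory ProbabilityTheory Filter

/-- The uniform occupancy model: `n` balls are placed independently and uniformly at
random into `m` urns; an outcome assigns to each ball its urn. -/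
noncomputable def occ (n m : ℕ) : Measure (Fin n → Fin m) :=
  (Fintype.card (Fin n → Fin m) : ENNReal)⁻¹ • Measure.count

/-- The number of balls in urn `i`. -/
def ballCount {n m : ℕ} (ω : Fin n → Fin m) (i : Fin m) : ℕ :=
  (Finset.univ.filter fun b => ω b = i).card

/-- The number of urns containing exactly `d` balls. -/
def urnCount (d : ℕ) {n m : ℕ} (ω : Fin n → Fin m) : ℕ :=
  (Finset.univ.filter fun i => ballCount ω i = d).card

/-- `μ_{n,m}`, the mean number of urns containing exactly `d` balls. -/
noncomputable def occMean (d n m : ℕ) : ℝ :=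
  ∫ ω, (urnCount d ω : ℝ) ∂(occ n m)

/-- `σ²_{n,m}`, the variance of the number of urns containing exactly `d` balls. -/
noncomputable def occVar (d n m : ℕ) : ℝ :=
  variance (fun ω => (urnCount d ω : ℝ)) (occ n m)

/-- `r_{n,m} = σ_{n,m} / (1 + (n/m)³)`. -/
noncomputable def occR (d n m : ℕ) : ℝ :=
  Real.sqrt (occVar d n m) / (1 + ((n : ℝ) / m) ^ 3)

/-- The standard normal distribution function `P(Z ≤ z)`. -/
noncomputable def stdGaussCDF (z : ℝ) : ℝ :=
  (gaussianReal 0 1 (Set.Iic z)).toReal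

/-- `P(W_{n,m} ≤ z) − P(Z ≤ z)`, where `W_{n,m}` is the standardized count. -/
noncomputable def occKolm (d n m : ℕ) (z : ℝ) : ℝ :=
  ((occ n m) {ω | ((urnCount d ω : ℝ) - occMean d n m) / Real.sqrt (occVar d n m) ≤ z}).toReal
    - stdGaussCDF z

open scoped Topology

/-! ### The Stein equation for the standard normal distribution -/

theorem stdGaussCDF_eq_cdf : stdGaussCDF = cdf (gaussianReal 0 1) := by
  funext z
  rw [cdf_eq_real]
  rfl

theorem hasDerivAt_gaussianPDFReal (x : ℝ) :
    HasDerivAt (gaussianPDFReal 0 1) (-x * gaussianPDFReal 0 1 x) x := by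
  have h : HasDerivAt (fun x : ℝ => -(x - 0) ^ 2 / (2 * ((1 : NNReal) : ℝ))) (-x) x := by
    have h := ((((hasDerivAt_id x).sub_const 0).pow 2).neg).div_const (2 * ((1 : NNReal) : ℝ))
    refine h.congr_deriv ?_
    simp
    ring
  have h2 := (h.exp).const_mul (√(2 * Real.pi * ((1 : NNReal) : ℝ)))⁻¹
  rw [gaussianPDFReal_def]
  refine h2.congr_deriv ?_
  ring

theorem continuous_gaussianPDFReal : Continuous (gaussianPDFReal 0 1) :=
  continuous_iff_continuousAt.2 fun x => (hasDerivAt_gaussianPDFReal x).continuousAt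

theorem hasDerivAt_stdGaussCDF (x : ℝ) :
    HasDerivAt stdGaussCDF (gaussianPDFReal 0 1 x) x := by
  have key : ∀ w, stdGaussCDF w = stdGaussCDF 0 + ∫ t in (0 : ℝ)..w, gaussianPDFReal 0 1 t := by
    intro w
    have h : ∀ w, stdGaussCDF w = ∫ t in Set.Iic w, gaussianPDFReal 0 1 t := by
      intro w
      rw [stdGaussCDF, gaussianReal_apply_eq_integral _ one_ne_zero, ENNReal.toReal_ofReal]
      exact setIntegral_nonneg measurableSet_Iic fun t _ => gaussianPDFReal_nonneg _ _ _
    rw [h, h, ← intervalIntegral.integral_Iic_sub_Iic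
      (integrable_gaussianPDFReal 0 1).integrableOn (integrable_gaussianPDFReal 0 1).integrableOn]
    ring
  rw [show stdGaussCDF = _ from funext key]
  exact (intervalIntegral.integral_hasDerivAt_right
    (integrable_gaussianPDFReal 0 1).intervalIntegrable
    (stronglyMeasurable_gaussianPDFReal 0 1).stronglyMeasurableAtFilter
    continuous_gaussianPDFReal.continuousAt).const_add _

theorem stdGaussCDF_nonneg (x : ℝ) : 0 ≤ stdGaussCDF x := ENNReal.toReal_nonneg

theorem stdGaussCDF_le_one (x : ℝ) : stdGaussCDF x ≤ 1 := by
  rw [stdGaussCDF_eq_cdf]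
  exact cdf_le_one _ x

theorem stdGaussCDF_mono : Monotone stdGaussCDF := by
  rw [stdGaussCDF_eq_cdf]
  exact monotone_cdf _

theorem tendsto_stdGaussCDF_atBot : Tendsto stdGaussCDF atBot (𝓝 0) := by
  rw [stdGaussCDF_eq_cdf]
  exact tendsto_cdf_atBot _

theorem tendsto_stdGaussCDF_atTop : Tendsto stdGaussCDF atTop (𝓝 1) := by
  rw [stdGaussCDF_eq_cdf]
  exact tendsto_cdf_atTop _

theorem gaussianPDFReal_le_one (x : ℝ) : gaussianPDFReal 0 1 x ≤ 1 := by
  rw [gaussianPDFReal]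
  have h1 : (√(2 * Real.pi * ((1 : NNReal) : ℝ)))⁻¹ ≤ 1 := by
    apply inv_le_one_of_one_le₀
    rw [Real.one_le_sqrt]
    have := Real.pi_gt_three
    simp only [NNReal.coe_one]
    linarith
  have h2 : Real.exp (-(x - 0) ^ 2 / (2 * ((1 : NNReal) : ℝ))) ≤ 1 := by
    rw [Real.exp_le_one_iff]
    simp only [sub_zero, NNReal.coe_one]
    nlinarith [sq_nonneg x]
  calc _ ≤ (1 : ℝ) * 1 := by gcongr
    _ = 1 := one_mul 1

/-- The lower Mills ratio bounds in both tails, as monotonicity of an interpolating function. -/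
theorem monotone_stdGaussCDF_add :
    Monotone fun x => stdGaussCDF x + x * gaussianPDFReal 0 1 x / (1 + x ^ 2) := by
  have hd : ∀ x : ℝ, HasDerivAt (fun x => stdGaussCDF x + x * gaussianPDFReal 0 1 x / (1 + x ^ 2))
      (2 * gaussianPDFReal 0 1 x / (1 + x ^ 2) ^ 2) x := by
    intro x
    have hx : (1 + x ^ 2) ≠ 0 := by positivity
    have h := (hasDerivAt_stdGaussCDF x).add
      (((hasDerivAt_id x).mul (hasDerivAt_gaussianPDFReal x)).div
        (((hasDerivAt_id x).pow 2).const_add 1) hx)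
    refine h.congr_deriv ?_
    simp
    field_simp
    ring
  refine monotone_of_deriv_nonneg (fun x => (hd x).differentiableAt) fun x => ?_
  rw [(hd x).deriv]
  have := gaussianPDFReal_nonneg 0 1 x
  positivity

theorem abs_mul_gaussianPDFReal_div_le (x : ℝ) (hx : x ≠ 0) :
    |x * gaussianPDFReal 0 1 x / (1 + x ^ 2)| ≤ |x⁻¹| := by
  have h1 := gaussianPDFReal_nonneg 0 1 x
  have h2 := gaussianPDFReal_le_one x
  rw [abs_div, abs_mul, abs_of_nonneg h1, abs_inv, abs_of_pos (by positivity : 0 < 1 + x ^ 2),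
    div_le_iff₀ (by positivity), ← div_eq_inv_mul, le_div_iff₀ (abs_pos.2 hx)]
  nlinarith [sq_abs x, mul_nonneg (sq_nonneg x) (sub_nonneg.2 h2)]

theorem abs_gaussianPDFReal_div_le (x : ℝ) : |gaussianPDFReal 0 1 x / x| ≤ |x⁻¹| := by
  rw [div_eq_mul_inv, abs_mul, abs_of_nonneg (gaussianPDFReal_nonneg 0 1 x)]
  exact mul_le_of_le_one_left (abs_nonneg _) (gaussianPDFReal_le_one x)

theorem stdGaussCDF_add_nonneg (x : ℝ) :
    0 ≤ stdGaussCDF x + x * gaussianPDFReal 0 1 x / (1 + x ^ 2) := by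
  refine monotone_stdGaussCDF_add.le_of_tendsto (b := x) ?_ 
  have h : Tendsto (fun x : ℝ => x * gaussianPDFReal 0 1 x / (1 + x ^ 2)) atBot (𝓝 0) := by
    apply squeeze_zero_norm' (a := fun x : ℝ => |x⁻¹|)
    · filter_upwards [eventually_ne_atBot 0] with x hx
      exact abs_mul_gaussianPDFReal_div_le x hx
    · simpa using (tendsto_inv_atBot_zero (𝕜 := ℝ)).abs
  simpa using tendsto_stdGaussCDF_atBot.add h

theorem stdGaussCDF_add_le_one (x : ℝ) :
    stdGaussCDF x + x * gaussianPDFReal 0 1 x / (1 + x ^ 2) ≤ 1 := by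
  refine monotone_stdGaussCDF_add.ge_of_tendsto (b := x) ?_
  have h : Tendsto (fun x : ℝ => x * gaussianPDFReal 0 1 x / (1 + x ^ 2)) atTop (𝓝 0) := by
    apply squeeze_zero_norm' (a := fun x : ℝ => |x⁻¹|)
    · filter_upwards [eventually_ne_atTop 0] with x hx
      exact abs_mul_gaussianPDFReal_div_le x hx
    · simpa using (tendsto_inv_atTop_zero (𝕜 := ℝ)).abs
  simpa using tendsto_stdGaussCDF_atTop.add h

theorem hasDerivAt_stdGaussCDF_add_div (x : ℝ) (hx : x ≠ 0) :
    HasDerivAt (fun x => stdGaussCDF x + gaussianPDFReal 0 1 x / x)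
      (-(gaussianPDFReal 0 1 x / x ^ 2)) x := by
  have h := (hasDerivAt_stdGaussCDF x).add ((hasDerivAt_gaussianPDFReal x).div (hasDerivAt_id x) hx)
  refine h.congr_deriv ?_
  simp
  field_simp
  ring

/-- The upper Mills ratio bound in the left tail. -/
theorem neg_mul_stdGaussCDF_le (x : ℝ) (hx : x ≤ 0) :
    -x * stdGaussCDF x ≤ gaussianPDFReal 0 1 x := by
  rcases hx.eq_or_lt with rfl | hx
  · simpa using gaussianPDFReal_nonneg 0 1 0
  have hanti : AntitoneOn (fun x => stdGaussCDF x + gaussianPDFReal 0 1 x / x) (Set.Iio 0) := by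
    apply antitoneOn_of_deriv_nonpos (convex_Iio 0)
    · exact fun y hy =>
        (hasDerivAt_stdGaussCDF_add_div y (ne_of_lt hy)).continuousAt.continuousWithinAt
    · rw [interior_Iio]
      exact fun y hy =>
        (hasDerivAt_stdGaussCDF_add_div y (ne_of_lt hy)).differentiableAt.differentiableWithinAt
    · rw [interior_Iio]
      intro y hy
      rw [(hasDerivAt_stdGaussCDF_add_div y (ne_of_lt hy)).deriv]
      have := gaussianPDFReal_nonneg 0 1 y
      exact neg_nonpos.2 (by positivity)
  have hlim : Tendsto (fun x => stdGaussCDF x + gaussianPDFReal 0 1 x / x) atBot (𝓝 0) := by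
    have h : Tendsto (fun x : ℝ => gaussianPDFReal 0 1 x / x) atBot (𝓝 0) := by
      apply squeeze_zero_norm (a := fun x : ℝ => |x⁻¹|) abs_gaussianPDFReal_div_le
      simpa using (tendsto_inv_atBot_zero (𝕜 := ℝ)).abs
    simpa using tendsto_stdGaussCDF_atBot.add h
  have h : stdGaussCDF x + gaussianPDFReal 0 1 x / x ≤ 0 := by
    refine ge_of_tendsto hlim ?_
    filter_upwards [eventually_le_atBot x] with y hy
    exact hanti (lt_of_le_of_lt hy hx) hx hy
  have h3 : -x * (stdGaussCDF x + gaussianPDFReal 0 1 x / x) ≤ 0 :=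
    mul_nonpos_of_nonneg_of_nonpos (by linarith) h
  have h4 : -x * (gaussianPDFReal 0 1 x / x) = -gaussianPDFReal 0 1 x := by
    rw [neg_mul, mul_div_cancel₀ _ hx.ne]
  linarith [mul_add (-x) (stdGaussCDF x) (gaussianPDFReal 0 1 x / x)]

/-- The upper Mills ratio bound in the right tail. -/
theorem mul_one_sub_stdGaussCDF_le (x : ℝ) (hx : 0 ≤ x) :
    x * (1 - stdGaussCDF x) ≤ gaussianPDFReal 0 1 x := by
  rcases hx.eq_or_lt with rfl | hx
  · simpa using gaussianPDFReal_nonneg 0 1 0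
  have hanti : AntitoneOn (fun x => stdGaussCDF x + gaussianPDFReal 0 1 x / x) (Set.Ioi 0) := by
    apply antitoneOn_of_deriv_nonpos (convex_Ioi 0)
    · exact fun y hy =>
        (hasDerivAt_stdGaussCDF_add_div y (ne_of_gt hy)).continuousAt.continuousWithinAt
    · rw [interior_Ioi]
      exact fun y hy =>
        (hasDerivAt_stdGaussCDF_add_div y (ne_of_gt hy)).differentiableAt.differentiableWithinAt
    · rw [interior_Ioi]
      intro y hy
      rw [(hasDerivAt_stdGaussCDF_add_div y (ne_of_gt hy)).deriv]
      have := gaussianPDFReal_nonneg 0 1 y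
      exact neg_nonpos.2 (by positivity)
  have hlim : Tendsto (fun x => stdGaussCDF x + gaussianPDFReal 0 1 x / x) atTop (𝓝 1) := by
    have h : Tendsto (fun x : ℝ => gaussianPDFReal 0 1 x / x) atTop (𝓝 0) := by
      apply squeeze_zero_norm (a := fun x : ℝ => |x⁻¹|) abs_gaussianPDFReal_div_le
      simpa using (tendsto_inv_atTop_zero (𝕜 := ℝ)).abs
    simpa using tendsto_stdGaussCDF_atTop.add h
  have h : 1 ≤ stdGaussCDF x + gaussianPDFReal 0 1 x / x := by
    refine le_of_tendsto hlim ?_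
    filter_upwards [eventually_ge_atTop x] with y hy
    exact hanti hx (lt_of_lt_of_le hx hy) hy
  have h3 := mul_le_mul_of_nonneg_left h hx.le
  have h4 : x * (gaussianPDFReal 0 1 x / x) = gaussianPDFReal 0 1 x := by
    field_simp
  linarith [mul_add x (stdGaussCDF x) (gaussianPDFReal 0 1 x / x)]

/-- The bounded solution of the Stein equation
`f' w - w * f w = 1[w ≤ z] - P(Z ≤ z)`. -/
noncomputable def steinSol (z w : ℝ) : ℝ :=
  if w ≤ z then (1 - stdGaussCDF z) * (stdGaussCDF w / gaussianPDFReal 0 1 w)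
  else stdGaussCDF z * ((1 - stdGaussCDF w) / gaussianPDFReal 0 1 w)

/-- The derivative of `steinSol z`, with its left limit at the jump `z`. -/
noncomputable def steinDeriv (z w : ℝ) : ℝ :=
  w * steinSol z w + (if w ≤ z then 1 else 0) - stdGaussCDF z

/-- The increasing function controlling the oscillation of `steinDeriv z`. -/
noncomputable def steinOsc (z w : ℝ) : ℝ :=
  w * steinSol z w - (if w ≤ z then 1 else 0)

theorem hasDerivAt_stdGaussCDF_div (x : ℝ) :
    HasDerivAt (fun w => stdGaussCDF w / gaussianPDFReal 0 1 w)
      (x * (stdGaussCDF x / gaussianPDFReal 0 1 x) + 1) x := by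
  have hp := (gaussianPDFReal_pos 0 1 x one_ne_zero).ne'
  refine ((hasDerivAt_stdGaussCDF x).div (hasDerivAt_gaussianPDFReal x) hp).congr_deriv ?_
  field_simp
  ring

theorem hasDerivAt_one_sub_stdGaussCDF_div (x : ℝ) :
    HasDerivAt (fun w => (1 - stdGaussCDF w) / gaussianPDFReal 0 1 w)
      (x * ((1 - stdGaussCDF x) / gaussianPDFReal 0 1 x) - 1) x := by
  have hp := (gaussianPDFReal_pos 0 1 x one_ne_zero).ne'
  refine (((hasDerivAt_stdGaussCDF x).const_sub 1).div
    (hasDerivAt_gaussianPDFReal x) hp).congr_deriv ?_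
  field_simp
  ring

theorem steinSol_of_le {z w : ℝ} (h : w ≤ z) :
    steinSol z w = (1 - stdGaussCDF z) * (stdGaussCDF w / gaussianPDFReal 0 1 w) := if_pos h

theorem steinSol_of_ge {z w : ℝ} (h : z ≤ w) :
    steinSol z w = stdGaussCDF z * ((1 - stdGaussCDF w) / gaussianPDFReal 0 1 w) := by
  rcases h.eq_or_lt with rfl | h
  · rw [steinSol_of_le le_rfl]
    ring
  · exact if_neg h.not_ge

theorem continuous_steinSol (z : ℝ) : Continuous (steinSol z) := by
  refine Continuous.if_le ?_ ?_ continuous_id continuous_const ?_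
  · exact continuous_const.mul (continuous_iff_continuousAt.2 fun x =>
      (hasDerivAt_stdGaussCDF_div x).continuousAt)
  · exact continuous_const.mul (continuous_iff_continuousAt.2 fun x =>
      (hasDerivAt_one_sub_stdGaussCDF_div x).continuousAt)
  · rintro x rfl
    ring

theorem hasDerivWithinAt_steinSol (z x : ℝ) :
    HasDerivWithinAt (steinSol z)
      (x * steinSol z x + (if x < z then 1 else 0) - stdGaussCDF z) (Set.Ici x) x := by
  by_cases h : x < z
  · have h1 := ((hasDerivAt_stdGaussCDF_div x).const_mul (1 - stdGaussCDF z)).congr_of_eventuallyEq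
      (f₁ := steinSol z) (by
        filter_upwards [eventually_le_nhds h] with y hy using steinSol_of_le hy)
    refine (h1.congr_deriv ?_).hasDerivWithinAt
    rw [if_pos h, steinSol_of_le h.le]
    ring
  · push Not at h
    have h1 := ((hasDerivAt_one_sub_stdGaussCDF_div x).const_mul
      (stdGaussCDF z)).hasDerivWithinAt (s := Set.Ici x)
    have h2 := h1.congr (f₁ := steinSol z) (fun y hy => steinSol_of_ge (h.trans hy))
      (steinSol_of_ge h)
    refine h2.congr_deriv ?_
    rw [if_neg h.not_gt, steinSol_of_ge h]
    ring

theorem monotone_mul_stdGaussCDF_div :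
    Monotone fun x => x * (stdGaussCDF x / gaussianPDFReal 0 1 x) := by
  have hd := fun x => (hasDerivAt_id x).mul (hasDerivAt_stdGaussCDF_div x)
  refine monotone_of_deriv_nonneg (fun x => (hd x).differentiableAt) fun x => ?_
  refine (hd x).deriv.symm ▸ ?_
  have hp := gaussianPDFReal_pos 0 1 x one_ne_zero
  have h := stdGaussCDF_add_nonneg x
  have : 1 * (stdGaussCDF x / gaussianPDFReal 0 1 x) +
      id x * (x * (stdGaussCDF x / gaussianPDFReal 0 1 x) + 1) =
      (1 + x ^ 2) / gaussianPDFReal 0 1 x *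
        (stdGaussCDF x + x * gaussianPDFReal 0 1 x / (1 + x ^ 2)) := by
    simp only [id]
    field_simp
    ring
  rw [this]
  positivity

theorem monotone_mul_one_sub_stdGaussCDF_div :
    Monotone fun x => x * ((1 - stdGaussCDF x) / gaussianPDFReal 0 1 x) := by
  have hd := fun x => (hasDerivAt_id x).mul (hasDerivAt_one_sub_stdGaussCDF_div x)
  refine monotone_of_deriv_nonneg (fun x => (hd x).differentiableAt) fun x => ?_
  refine (hd x).deriv.symm ▸ ?_
  have hp := gaussianPDFReal_pos 0 1 x one_ne_zero
  have h := sub_nonneg.2 (stdGaussCDF_add_le_one x)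
  have : 1 * ((1 - stdGaussCDF x) / gaussianPDFReal 0 1 x) +
      id x * (x * ((1 - stdGaussCDF x) / gaussianPDFReal 0 1 x) - 1) =
      (1 + x ^ 2) / gaussianPDFReal 0 1 x *
        (1 - (stdGaussCDF x + x * gaussianPDFReal 0 1 x / (1 + x ^ 2))) := by
    simp only [id]
    field_simp
    ring
  rw [this]
  positivity

theorem monotone_mul_steinSol (z : ℝ) : Monotone fun w => w * steinSol z w := by
  have h1 : MonotoneOn (fun w => w * steinSol z w) (Set.Iic z) := by
    intro x hx y hy hxy
    have := mul_le_mul_of_nonneg_left (monotone_mul_stdGaussCDF_div hxy)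
      (sub_nonneg.2 (stdGaussCDF_le_one z))
    simp only [steinSol_of_le hx, steinSol_of_le hy]
    linarith
  have h2 : MonotoneOn (fun w => w * steinSol z w) (Set.Ici z) := by
    intro x hx y hy hxy
    have := mul_le_mul_of_nonneg_left (monotone_mul_one_sub_stdGaussCDF_div hxy)
      (stdGaussCDF_nonneg z)
    simp only [steinSol_of_ge hx, steinSol_of_ge hy]
    linarith
  exact h1.Iic_union_Ici h2

theorem steinSol_nonneg (z w : ℝ) : 0 ≤ steinSol z w := by
  have hp := gaussianPDFReal_nonneg 0 1 w
  have h1 := stdGaussCDF_nonneg w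
  have h2 := sub_nonneg.2 (stdGaussCDF_le_one w)
  have h3 := stdGaussCDF_nonneg z
  have h4 := sub_nonneg.2 (stdGaussCDF_le_one z)
  unfold steinSol
  split_ifs <;> positivity

theorem steinSol_le_left (z w : ℝ) : steinSol z w ≤ stdGaussCDF w / gaussianPDFReal 0 1 w := by
  have hp := gaussianPDFReal_nonneg 0 1 w
  have h1 := stdGaussCDF_nonneg w
  rcases le_total w z with h | h
  · rw [steinSol_of_le h]
    exact mul_le_of_le_one_left (by positivity) (by linarith [stdGaussCDF_nonneg z])
  · rw [steinSol_of_ge h, mul_div_assoc']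
    gcongr
    nlinarith [stdGaussCDF_mono h, stdGaussCDF_nonneg z]

theorem steinSol_le_right (z w : ℝ) :
    steinSol z w ≤ (1 - stdGaussCDF w) / gaussianPDFReal 0 1 w := by
  have hp := gaussianPDFReal_nonneg 0 1 w
  have h1 := sub_nonneg.2 (stdGaussCDF_le_one w)
  rcases le_total w z with h | h
  · rw [steinSol_of_le h, mul_div_assoc']
    gcongr
    nlinarith [stdGaussCDF_mono h, stdGaussCDF_le_one z, stdGaussCDF_nonneg w]
  · rw [steinSol_of_ge h]
    exact mul_le_of_le_one_left (by positivity) (stdGaussCDF_le_one z)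

theorem abs_mul_steinSol_le_one (z w : ℝ) : |w * steinSol z w| ≤ 1 := by
  have hp := gaussianPDFReal_pos 0 1 w one_ne_zero
  have h0 := steinSol_nonneg z w
  rw [abs_mul, abs_of_nonneg h0]
  rcases le_total 0 w with h | h
  · rw [abs_of_nonneg h]
    calc w * steinSol z w ≤ w * ((1 - stdGaussCDF w) / gaussianPDFReal 0 1 w) := by
          gcongr
          exact steinSol_le_right z w
      _ = w * (1 - stdGaussCDF w) / gaussianPDFReal 0 1 w := by ring
      _ ≤ 1 := (div_le_one hp).2 (mul_one_sub_stdGaussCDF_le w h)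
  · rw [abs_of_nonpos h]
    calc -w * steinSol z w ≤ -w * (stdGaussCDF w / gaussianPDFReal 0 1 w) := by
          have : 0 ≤ -w := by linarith
          gcongr
          exact steinSol_le_left z w
      _ = -w * stdGaussCDF w / gaussianPDFReal 0 1 w := by ring
      _ ≤ 1 := (div_le_one hp).2 (neg_mul_stdGaussCDF_le w h)

theorem abs_steinDeriv_le_two (z w : ℝ) : |steinDeriv z w| ≤ 2 := by
  have h1 := abs_le.1 (abs_mul_steinSol_le_one z w)
  have h2 := stdGaussCDF_nonneg z
  have h3 := stdGaussCDF_le_one z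
  rw [steinDeriv, abs_le]
  split_ifs <;> constructor <;> linarith

theorem abs_steinOsc_le_two (z w : ℝ) : |steinOsc z w| ≤ 2 := by
  have h1 := abs_le.1 (abs_mul_steinSol_le_one z w)
  rw [steinOsc, abs_le]
  split_ifs <;> constructor <;> linarith

/-- First order expansion of the Stein solution, with a remainder that is a product of an
increment and an increment of a bounded increasing function. -/
theorem abs_steinSol_sub_sub_le (z a b : ℝ) :
    |steinSol z b - steinSol z a - (b - a) * steinDeriv z b| ≤
      (b - a) * (steinOsc z b - steinOsc z a) := by
  have hder : ∀ x, HasDerivWithinAt (fun w => steinSol z w - w * steinDeriv z b)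
      (x * steinSol z x + (if x < z then 1 else 0) - stdGaussCDF z - 1 * steinDeriv z b)
      (Set.Ici x) x := fun x =>
    (hasDerivWithinAt_steinSol z x).sub ((hasDerivWithinAt_id x _).mul_const _)
  have hcont : Continuous fun w => steinSol z w - w * steinDeriv z b :=
    (continuous_steinSol z).sub (continuous_id.mul continuous_const)
  have hmono := monotone_mul_steinSol z
  rcases le_total a b with hab | hab
  · have h := norm_image_sub_le_of_norm_deriv_right_le_segment (C := steinOsc z b - steinOsc z a)
      (a := a) (b := b) hcont.continuousOn (fun x _ => hder x) ?_ b ⟨hab, le_rfl⟩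
    · rw [Real.norm_eq_abs] at h
      convert h using 1
      · congr 1
        ring
      · ring
    · rintro x ⟨hx, hx'⟩
      have h1 := hmono hx
      have h2 := hmono hx'.le
      simp only at h1 h2
      rw [Real.norm_eq_abs, abs_le]
      simp only [steinOsc, steinDeriv]
      split_ifs <;> constructor <;> linarith
  · have h := norm_image_sub_le_of_norm_deriv_right_le_segment (C := steinOsc z a - steinOsc z b)
      (a := b) (b := a) hcont.continuousOn (fun x _ => hder x) ?_ a ⟨hab, le_rfl⟩
    · rw [Real.norm_eq_abs, ← abs_neg] at h
      convert h using 1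
      · congr 1
        ring
      · ring
    · rintro x ⟨hx, hx'⟩
      have h1 := hmono hx
      have h2 := hmono hx'.le
      simp only at h1 h2
      rw [Real.norm_eq_abs, abs_le]
      simp only [steinOsc, steinDeriv]
      split_ifs <;> constructor <;> linarith

/-! ### Covariance identity and Efron–Stein inequality for independent uniform coordinates -/

open scoped BigOperators

/-- The first of two independent copies. -/
def firstCopy {n : ℕ} {β : Type*} (ω : Fin n → β × β) : Fin n → β := fun l => (ω l).1

/-- The configuration whose coordinates before `j` come from the second copy and whose other
coordinates come from the first copy. -/
def hybrid {n : ℕ} {β : Type*} (j : ℕ) (ω : Fin n → β × β) : Fin n → β :=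
  fun l => if (l : ℕ) < j then (ω l).2 else (ω l).1

/-- The first copy, with coordinate `j` resampled from the second copy. -/
def resample {n : ℕ} {β : Type*} (j : Fin n) (ω : Fin n → β × β) : Fin n → β :=
  Function.update (firstCopy ω) j (ω j).2

/-- Exchange the two copies of coordinate `j`. -/
def swapAt {n : ℕ} {β : Type*} (j : Fin n) (ω : Fin n → β × β) : Fin n → β × β :=
  Function.update ω j (ω j).swap

/-- The increment of `F` when the hybrid configuration moves past coordinate `j`. -/
def hybridDiff {n : ℕ} {β : Type*} (F : (Fin n → β) → ℝ) (j : Fin n) (ω : Fin n → β × β) : ℝ :=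
  F (hybrid j ω) - F (hybrid (j + 1) ω)

/-- The increment of `F` when coordinate `j` is resampled. -/
def resampleDiff {n : ℕ} {β : Type*} (F : (Fin n → β) → ℝ) (j : Fin n) (ω : Fin n → β × β) : ℝ :=
  F (firstCopy ω) - F (resample j ω)

section Copies

variable {n : ℕ} {β : Type*}

theorem swapAt_involutive (j : Fin n) : Function.Involutive (swapAt (β := β) j) := by
  intro ω
  simp [swapAt]

theorem firstCopy_swapAt (j : Fin n) (ω : Fin n → β × β) :
    firstCopy (swapAt j ω) = resample j ω := by
  funext l
  by_cases h : l = j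
  · subst h
    simp [firstCopy, resample, swapAt]
  · simp [firstCopy, resample, swapAt, h]

theorem resample_swapAt (j : Fin n) (ω : Fin n → β × β) :
    resample j (swapAt j ω) = firstCopy ω := by
  rw [← firstCopy_swapAt, swapAt_involutive]

theorem hybrid_swapAt (j : Fin n) (ω : Fin n → β × β) :
    hybrid j (swapAt j ω) = hybrid (j + 1) ω := by
  funext l
  by_cases h : l = j
  · subst h
    simp [hybrid, swapAt]
  · have h1 : (l : ℕ) < j + 1 ↔ (l : ℕ) < j := by
      have : (l : ℕ) ≠ j := fun e => h (Fin.ext e)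
      omega
    simp [hybrid, swapAt, h, h1]

theorem hybridDiff_swapAt (F : (Fin n → β) → ℝ) (j : Fin n) (ω : Fin n → β × β) :
    hybridDiff F j (swapAt j ω) = -hybridDiff F j ω := by
  have h := hybrid_swapAt j (swapAt j ω)
  rw [swapAt_involutive] at h
  rw [hybridDiff, hybridDiff, hybrid_swapAt, ← h]
  ring

theorem resampleDiff_swapAt (F : (Fin n → β) → ℝ) (j : Fin n) (ω : Fin n → β × β) :
    resampleDiff F j (swapAt j ω) = -resampleDiff F j ω := by
  rw [resampleDiff, resampleDiff, firstCopy_swapAt, resample_swapAt]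
  ring

theorem sum_hybridDiff (F : (Fin n → β) → ℝ) (ω : Fin n → β × β) :
    ∑ j, hybridDiff F j ω = F (firstCopy ω) - F (fun l => (ω l).2) := by
  have h := Finset.sum_range_sub' (fun j => F (hybrid j ω)) n
  rw [← Fin.sum_univ_eq_sum_range (fun j => F (hybrid j ω) - F (hybrid (j + 1) ω))] at h
  simp only [hybridDiff, h]
  congr 2
  funext l
  simp [hybrid]

variable [Fintype β]

theorem expect_swapAt (j : Fin n) (g : (Fin n → β × β) → ℝ) :
    𝔼 ω, g (swapAt j ω) = 𝔼 ω, g ω :=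
  Fintype.expect_equiv (swapAt_involutive j).toPerm _ _ fun _ => rfl

theorem expect_pair (g : (Fin n → β) → (Fin n → β) → ℝ) :
    𝔼 ω : Fin n → β × β, g (firstCopy ω) (fun l => (ω l).2) = 𝔼 ξ, 𝔼 ξ', g ξ ξ' := by
  rw [← Finset.expect_product', Finset.univ_product_univ]
  exact Fintype.expect_equiv (Equiv.arrowProdEquivProdArrow (Fin n) (fun _ => β) (fun _ => β))
    _ _ fun _ => rfl

/-- Exchangeability of a coordinate with its resampled value. -/
theorem expect_update_swap (i : Fin n) (g : (Fin n → β) → β → ℝ) :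
    𝔼 ξ, 𝔼 y, g (Function.update ξ i y) (ξ i) = 𝔼 ξ, 𝔼 y, g ξ y := by
  have hinv : Function.Involutive fun p : (Fin n → β) × β =>
      (Function.update p.1 i p.2, p.1 i) := by
    rintro ⟨ξ, y⟩
    simp
  rw [← Finset.expect_product', ← Finset.expect_product', Finset.univ_product_univ]
  exact Fintype.expect_equiv hinv.toPerm _ _ fun _ => rfl

theorem expect_hybridDiff_sq (F : (Fin n → β) → ℝ) (j : Fin n) :
    𝔼 ω, hybridDiff F j ω ^ 2 = 𝔼 ω, resampleDiff F j ω ^ 2 := by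
  have hinv : Function.Involutive fun (ω : Fin n → β × β) (l : Fin n) =>
      if (l : ℕ) < j then (ω l).swap else ω l := by
    intro ω
    funext l
    by_cases h : (l : ℕ) < j <;> simp [h]
  refine Fintype.expect_equiv hinv.toPerm _ _ fun ω => ?_
  have h1 : firstCopy (hinv.toPerm _ ω) = hybrid j ω := by
    funext l
    by_cases h : l < j <;> simp [h, firstCopy, hybrid]
  have h2 : resample j (hinv.toPerm _ ω) = hybrid (j + 1) ω := by
    rw [resample, h1, ← hybrid_swapAt]
    funext l
    by_cases h : l = j
    · subst h
      simp [hybrid, swapAt]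
    · simp [hybrid, swapAt, h]
  rw [hybridDiff, resampleDiff, h1, h2]

variable [Nonempty β]

theorem expect_firstCopy (g : (Fin n → β) → ℝ) :
    𝔼 ω : Fin n → β × β, g (firstCopy ω) = 𝔼 ξ, g ξ := by
  rw [expect_pair fun ξ _ => g ξ]
  simp

theorem covariance_identity (F φ : (Fin n → β) → ℝ) :
    𝔼 ξ, F ξ * φ ξ - (𝔼 ξ, F ξ) * 𝔼 ξ, φ ξ =
      ∑ j, (𝔼 ω, hybridDiff F j ω * resampleDiff φ j ω) / 2 := by
  have h1 : 𝔼 ξ, F ξ * φ ξ - (𝔼 ξ, F ξ) * 𝔼 ξ, φ ξ =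
      𝔼 ω : Fin n → β × β, (F (firstCopy ω) - F (fun l => (ω l).2)) * φ (firstCopy ω) := by
    rw [expect_pair fun ξ ξ' => (F ξ - F ξ') * φ ξ]
    simp_rw [← Finset.expect_mul, Finset.expect_sub_distrib, sub_mul,
      Finset.expect_sub_distrib, ← Finset.mul_expect, Fintype.expect_const]
  rw [h1]
  simp_rw [← sum_hybridDiff, Finset.sum_mul]
  rw [Finset.expect_sum_comm]
  refine Finset.sum_congr rfl fun j _ => ?_
  have h2 := expect_swapAt j fun ω => hybridDiff F j ω * φ (firstCopy ω)
  simp only [hybridDiff_swapAt, firstCopy_swapAt, neg_mul, Finset.expect_neg_distrib] at h2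
  simp only [resampleDiff, mul_sub, Finset.expect_sub_distrib]
  linarith

/-- Averaging over one coordinate first. -/
theorem expect_update (i : Fin n) (g : (Fin n → β) → ℝ) :
    𝔼 ξ, 𝔼 y, g (Function.update ξ i y) = 𝔼 ξ, g ξ := by
  have hinv : Function.Involutive fun p : (Fin n → β) × β =>
      (Function.update p.1 i p.2, p.1 i) := by
    rintro ⟨ξ, y⟩
    simp
  have h1 : 𝔼 ξ, g ξ = 𝔼 ξ, 𝔼 _y : β, g ξ := by simp
  rw [h1, ← Finset.expect_product', ← Finset.expect_product', Finset.univ_product_univ]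
  exact Fintype.expect_equiv hinv.toPerm _ _ fun _ => rfl

/-- The Efron–Stein inequality. -/
theorem efron_stein (G : (Fin n → β) → ℝ) :
    𝔼 ξ, G ξ ^ 2 - (𝔼 ξ, G ξ) ^ 2 ≤
      ∑ i, (𝔼 ξ, 𝔼 y, (G ξ - G (Function.update ξ i y)) ^ 2) / 2 := by
  have h := covariance_identity G G
  simp only [← sq] at h
  rw [h]
  refine Finset.sum_le_sum fun i _ => ?_
  have h1 : 𝔼 ω, hybridDiff G i ω * resampleDiff G i ω ≤
      (𝔼 ω, hybridDiff G i ω ^ 2 + 𝔼 ω, resampleDiff G i ω ^ 2) / 2 := by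
    rw [← Finset.expect_add_distrib, Finset.expect_div]
    refine Finset.expect_le_expect fun ω _ => ?_
    nlinarith [sq_nonneg (hybridDiff G i ω - resampleDiff G i ω)]
  have h2 : 𝔼 ω, resampleDiff G i ω ^ 2 =
      𝔼 ξ, 𝔼 y, (G ξ - G (Function.update ξ i y)) ^ 2 := by
    refine (expect_pair fun ξ ξ' => (G ξ - G (Function.update ξ i (ξ' i))) ^ 2).trans ?_
    refine Finset.expect_congr rfl fun ξ _ => ?_
    rw [← expect_update i]
    simp
  rw [expect_hybridDiff_sq, h2] at h1
  linarith

/-- A quantitative normal approximation in terms of the two copies, for a standardized function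
of independent uniform coordinates. -/
theorem abs_kolmogorov_le (F : (Fin n → β) → ℝ) (h0 : 𝔼 ξ, F ξ = 0) (z : ℝ) :
    |𝔼 ξ, (if F ξ ≤ z then 1 else 0) - stdGaussCDF z| ≤
      2 * 𝔼 ω, |1 - (∑ j, hybridDiff F j ω * resampleDiff F j ω) / 2| +
      2 * 𝔼 ω, |∑ j, |hybridDiff F j ω| * resampleDiff F j ω| := by
  have hcov := covariance_identity F fun ξ => steinSol z (F ξ)
  rw [h0, zero_mul, sub_zero] at hcov
  have hstein : 𝔼 ξ, (if F ξ ≤ z then (1 : ℝ) else 0) - stdGaussCDF z =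
      𝔼 ω, steinDeriv z (F (firstCopy ω)) - 𝔼 ξ, F ξ * steinSol z (F ξ) := by
    rw [expect_firstCopy fun ξ => steinDeriv z (F ξ)]
    simp only [steinDeriv, Finset.expect_sub_distrib, Finset.expect_add_distrib,
      Fintype.expect_const]
    ring
  have hrem : ∀ j ∈ Finset.univ, |𝔼 ω, hybridDiff F j ω *
        resampleDiff (fun ξ => steinSol z (F ξ)) j ω -
      𝔼 ω, hybridDiff F j ω * (resampleDiff F j ω * steinDeriv z (F (firstCopy ω)))| ≤
      2 * 𝔼 ω, |hybridDiff F j ω| * resampleDiff F j ω * steinOsc z (F (firstCopy ω)) := by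
    intro j _
    have hswap := expect_swapAt j fun ω =>
      |hybridDiff F j ω| * resampleDiff F j ω * steinOsc z (F (firstCopy ω))
    simp only [hybridDiff_swapAt, firstCopy_swapAt, resampleDiff_swapAt, abs_neg, mul_neg,
      neg_mul, Finset.expect_neg_distrib] at hswap
    have hsplit : 2 * 𝔼 ω, |hybridDiff F j ω| * resampleDiff F j ω * steinOsc z (F (firstCopy ω)) =
        𝔼 ω, |hybridDiff F j ω| * (resampleDiff F j ω *
          (steinOsc z (F (firstCopy ω)) - steinOsc z (F (resample j ω)))) := by
      simp only [mul_sub, Finset.expect_sub_distrib, ← mul_assoc]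
      linarith
    rw [hsplit, ← Finset.expect_sub_distrib]
    refine (Finset.abs_expect_le _ _).trans (Finset.expect_le_expect fun ω _ => ?_)
    rw [← mul_sub, abs_mul]
    refine mul_le_mul_of_nonneg_left ?_ (abs_nonneg _)
    exact abs_steinSol_sub_sub_le z (F (resample j ω)) (F (firstCopy ω))
  have hmain : 𝔼 ω, steinDeriv z (F (firstCopy ω)) -
      ∑ j, (𝔼 ω, hybridDiff F j ω * (resampleDiff F j ω * steinDeriv z (F (firstCopy ω)))) / 2 =
      𝔼 ω, steinDeriv z (F (firstCopy ω)) *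
        (1 - (∑ j, hybridDiff F j ω * resampleDiff F j ω) / 2) := by
    rw [← Finset.sum_div, ← Finset.expect_sum_comm, Finset.expect_div, ← Finset.expect_sub_distrib]
    refine Finset.expect_congr rfl fun ω _ => ?_
    simp only [← mul_assoc, ← Finset.sum_mul]
    ring
  have hA : |𝔼 ω, steinDeriv z (F (firstCopy ω)) *
        (1 - (∑ j, hybridDiff F j ω * resampleDiff F j ω) / 2)| ≤
      2 * 𝔼 ω, |1 - (∑ j, hybridDiff F j ω * resampleDiff F j ω) / 2| := by
    rw [Finset.mul_expect]
    refine (Finset.abs_expect_le _ _).trans (Finset.expect_le_expect fun ω _ => ?_)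
    rw [abs_mul]
    exact mul_le_mul_of_nonneg_right (abs_steinDeriv_le_two _ _) (abs_nonneg _)
  have hB : ∑ j, 2 * (𝔼 ω, |hybridDiff F j ω| * resampleDiff F j ω *
        steinOsc z (F (firstCopy ω))) / 2 ≤
      2 * 𝔼 ω, |∑ j, |hybridDiff F j ω| * resampleDiff F j ω| := by
    simp only [mul_div_cancel_left₀ _ (two_ne_zero (α := ℝ))]
    rw [← Finset.expect_sum_comm, Finset.mul_expect]
    refine Finset.expect_le_expect fun ω _ => ?_
    rw [← Finset.sum_mul]
    refine (le_abs_self _).trans ?_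
    rw [abs_mul, mul_comm 2]
    exact mul_le_mul_of_nonneg_left (abs_steinOsc_le_two _ _) (abs_nonneg _)
  rw [hstein, hcov]
  have hdiff : |∑ j, (𝔼 ω, hybridDiff F j ω *
        resampleDiff (fun ξ => steinSol z (F ξ)) j ω) / 2 -
      ∑ j, (𝔼 ω, hybridDiff F j ω * (resampleDiff F j ω * steinDeriv z (F (firstCopy ω)))) / 2| ≤
      ∑ j, 2 * (𝔼 ω, |hybridDiff F j ω| * resampleDiff F j ω *
        steinOsc z (F (firstCopy ω))) / 2 := by
    rw [← Finset.sum_sub_distrib]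
    refine (Finset.abs_sum_le_sum_abs _ _).trans (Finset.sum_le_sum fun j hj => ?_)
    rw [← sub_div, abs_div, abs_of_pos (two_pos (α := ℝ))]
    exact div_le_div_of_nonneg_right (hrem j hj) two_pos.le
  rw [← hmain] at hA
  rw [abs_le] at *
  constructor <;> linarith [hA.1, hA.2, hdiff.1, hdiff.2]

/-- The Cauchy–Schwarz inequality in the form `E|c - G| ≤ sd(G)` when `E G = c`. -/
theorem expect_abs_sub_le_sqrt (G : (Fin n → β) → ℝ) (c V : ℝ) (hc : 𝔼 ξ, G ξ = c)
    (hV : 𝔼 ξ, G ξ ^ 2 - (𝔼 ξ, G ξ) ^ 2 ≤ V) : 𝔼 ξ, |c - G ξ| ≤ √V := by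
  apply Real.le_sqrt_of_sq_le
  have hvar : ∀ H : (Fin n → β) → ℝ, (𝔼 ξ, H ξ) ^ 2 ≤ 𝔼 ξ, H ξ ^ 2 := by
    intro H
    have : 0 ≤ 𝔼 ξ, (H ξ - 𝔼 ζ, H ζ) ^ 2 := Finset.expect_nonneg fun ξ _ => sq_nonneg _
    simp only [sub_sq, Finset.expect_add_distrib, Finset.expect_sub_distrib,
      Fintype.expect_const, ← Finset.mul_expect, ← Finset.expect_mul] at this
    linarith
  have h := hvar fun ξ => |c - G ξ|
  simp only [sq_abs, sub_sq, Finset.expect_add_distrib, Finset.expect_sub_distrib,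
    Fintype.expect_const, ← Finset.mul_expect, hc] at h
  rw [hc] at hV
  linarith

end Copies

/-! ### Local dependence of the urn count on the balls -/

section Locality

variable {n m : ℕ}

theorem ballCount_update_of_ne (X : Fin n → Fin m) (j : Fin n) (q u : Fin m) (hp : u ≠ X j)
    (hq : u ≠ q) : ballCount (Function.update X j q) u = ballCount X u := by
  unfold ballCount
  congr 1
  ext l
  by_cases h : l = j
  · subst h
    simp [hp.symm, hq.symm]
  · simp [h]

theorem urnCount_eq_sum (d : ℕ) (X : Fin n → Fin m) :
    (urnCount d X : ℝ) = ∑ u, if ballCount X u = d then 1 else 0 := by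
  simp [urnCount]

theorem urnCount_sub_update (d : ℕ) (X : Fin n → Fin m) (j : Fin n) (q : Fin m) :
    (urnCount d X : ℝ) - urnCount d (Function.update X j q) =
      ∑ u ∈ {X j, q}, ((if ballCount X u = d then 1 else 0) -
        if ballCount (Function.update X j q) u = d then 1 else 0) := by
  rw [urnCount_eq_sum, urnCount_eq_sum, ← Finset.sum_sub_distrib]
  refine (Finset.sum_subset (Finset.subset_univ _) fun u _ hu => ?_).symm
  simp only [Finset.mem_insert, Finset.mem_singleton, not_or] at hu
  rw [ballCount_update_of_ne X j q u hu.1 hu.2, sub_self]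

theorem abs_urnCount_sub_update_le (d : ℕ) (X : Fin n → Fin m) (j : Fin n) (q : Fin m) :
    |(urnCount d X : ℝ) - urnCount d (Function.update X j q)| ≤ 2 := by
  rw [urnCount_sub_update]
  refine (Finset.abs_sum_le_sum_abs _ _).trans ?_
  calc _ ≤ ∑ u ∈ {X j, q}, (1 : ℝ) := by
        refine Finset.sum_le_sum fun u _ => ?_
        split_ifs <;> norm_num
    _ ≤ 2 := by
        rw [Finset.sum_const, nsmul_eq_mul, mul_one]
        exact_mod_cast Finset.card_le_two

theorem le_card_of_ballCount_eq {d : ℕ} {X : Fin n → Fin m} {u : Fin m} (j : Fin n)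
    (h : ballCount X u = d) :
    d - 1 ≤ ((Finset.univ.erase j).filter fun l => X l = u).card := by
  rw [Finset.filter_erase, ← h]
  exact Finset.pred_card_le_card_erase

theorem exists_subset_of_urnCount_ne {d : ℕ} {X : Fin n → Fin m} {j : Fin n} {q : Fin m}
    (h : (urnCount d X : ℝ) - urnCount d (Function.update X j q) ≠ 0) :
    ∃ K ∈ (Finset.univ.erase j).powersetCard (d - 1),
      (∀ l ∈ K, X l = X j) ∨ ∀ l ∈ K, X l = q := by
  rw [urnCount_sub_update] at h
  obtain ⟨u, hu, hne⟩ := Finset.exists_ne_zero_of_sum_ne_zero h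
  have hcard : d - 1 ≤ ((Finset.univ.erase j).filter fun l => X l = u).card := by
    by_cases h1 : ballCount X u = d
    · exact le_card_of_ballCount_eq j h1
    · by_cases h2 : ballCount (Function.update X j q) u = d
      · refine (le_card_of_ballCount_eq j h2).trans (le_of_eq ?_)
        congr 1
        refine Finset.filter_congr fun l hl => ?_
        rw [Function.update_of_ne (Finset.ne_of_mem_erase hl)]
      · simp [h1, h2] at hne
  obtain ⟨K, hK, hKc⟩ := Finset.exists_subset_card_eq hcard
  refine ⟨K, Finset.mem_powersetCard.2 ⟨hK.trans (Finset.filter_subset _ _), hKc⟩, ?_⟩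
  have hKu : ∀ l ∈ K, X l = u := fun l hl => (Finset.mem_filter.1 (hK hl)).2
  simp only [Finset.mem_insert, Finset.mem_singleton] at hu
  rcases hu with rfl | rfl
  · exact Or.inl hKu
  · exact Or.inr hKu

theorem urnCount_sub_update_update (d : ℕ) (X : Fin n → Fin m) {i j : Fin n} (hij : j ≠ i)
    (q r : Fin m) (h1 : X j ≠ X i) (h2 : X j ≠ r) (h3 : q ≠ X i) (h4 : q ≠ r) :
    (urnCount d (Function.update X i r) : ℝ) -
        urnCount d (Function.update (Function.update X i r) j q) =
      urnCount d X - urnCount d (Function.update X j q) := by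
  rw [urnCount_sub_update, urnCount_sub_update, Function.update_of_ne hij]
  refine Finset.sum_congr rfl fun u hu => ?_
  have hne : u ≠ X i ∧ u ≠ r := by
    simp only [Finset.mem_insert, Finset.mem_singleton] at hu
    rcases hu with rfl | rfl
    · exact ⟨h1, h2⟩
    · exact ⟨h3, h4⟩
  rw [Function.update_comm hij.symm, ballCount_update_of_ne X i r u hne.1 hne.2,
    ballCount_update_of_ne (Function.update X j q) i r u _ hne.2]
  rw [Function.update_of_ne hij.symm]
  exact hne.1

/-- The urns visited by either copy of ball `i`, before or after resampling. -/
def zone (i : Fin n) (ω : Fin n → Fin m × Fin m) (y : Fin m × Fin m) : Finset (Fin m) :=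
  {(ω i).1, (ω i).2, y.1, y.2}

/-- Ball `j` visits the zone of ball `i`. -/
def Touches (i : Fin n) (ω : Fin n → Fin m × Fin m) (y : Fin m × Fin m) (j : Fin n) : Prop :=
  (ω j).1 ∈ zone i ω y ∨ (ω j).2 ∈ zone i ω y

instance (i : Fin n) (ω : Fin n → Fin m × Fin m) (y : Fin m × Fin m) (j : Fin n) :
    Decidable (Touches i ω y j) := by
  unfold Touches
  infer_instance

theorem hybrid_succ {β : Type*} (j : Fin n) (ω : Fin n → β × β) :
    hybrid (j + 1) ω = Function.update (hybrid j ω) j (ω j).2 := by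
  funext l
  by_cases h : l = j
  · subst h
    simp [hybrid]
  · have h1 : (l : ℕ) < j + 1 ↔ (l : ℕ) < j := by
      have : (l : ℕ) ≠ j := fun e => h (Fin.ext e)
      omega
    simp [hybrid, h, h1]

theorem hybrid_update {β : Type*} (j : ℕ) (i : Fin n) (ω : Fin n → β × β) (y : β × β) :
    hybrid j (Function.update ω i y) =
      Function.update (hybrid j ω) i (if (i : ℕ) < j then y.2 else y.1) := by
  funext l
  by_cases h : l = i
  · subst h
    simp [hybrid]
  · simp [hybrid, h]

theorem firstCopy_eq_hybrid {β : Type*} (ω : Fin n → β × β) : firstCopy ω = hybrid 0 ω := by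
  funext l
  simp [firstCopy, hybrid]

theorem update_hybrid_update_of_not_touches (d k : ℕ) {i j : Fin n} (hij : j ≠ i) (hkj : k ≤ j)
    {ω : Fin n → Fin m × Fin m} {y : Fin m × Fin m} (h : ¬Touches i ω y j) :
    (urnCount d (hybrid k (Function.update ω i y)) : ℝ) -
        urnCount d (Function.update (hybrid k (Function.update ω i y)) j (ω j).2) =
      urnCount d (hybrid k ω) - urnCount d (Function.update (hybrid k ω) j (ω j).2) := by
  simp only [Touches, zone, Finset.mem_insert, Finset.mem_singleton, not_or] at h
  rw [hybrid_update]
  have hj : hybrid k ω j = (ω j).1 := by simp [hybrid, hkj]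
  have hi : hybrid k ω i = (ω i).1 ∨ hybrid k ω i = (ω i).2 := by
    unfold hybrid
    split_ifs <;> simp
  obtain ⟨⟨a1, a2, a3, a4⟩, b1, b2, b3, b4⟩ := h
  apply urnCount_sub_update_update d _ hij
  · rw [hj]
    rcases hi with hi | hi <;> rwa [hi]
  · rw [hj]
    split_ifs <;> assumption
  · rcases hi with hi | hi <;> rwa [hi]
  · split_ifs <;> assumption

theorem resampleDiff_update_of_not_touches (d : ℕ) {i j : Fin n} (hij : j ≠ i)
    {ω : Fin n → Fin m × Fin m} {y : Fin m × Fin m} (h : ¬Touches i ω y j) :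
    resampleDiff (fun X => (urnCount d X : ℝ)) j (Function.update ω i y) =
      resampleDiff (fun X => (urnCount d X : ℝ)) j ω := by
  simp only [resampleDiff, resample, firstCopy_eq_hybrid, Function.update_of_ne hij]
  exact update_hybrid_update_of_not_touches d 0 hij (Nat.zero_le _) h

theorem hybridDiff_update_of_not_touches (d : ℕ) {i j : Fin n} (hij : j ≠ i)
    {ω : Fin n → Fin m × Fin m} {y : Fin m × Fin m} (h : ¬Touches i ω y j) :
    hybridDiff (fun X => (urnCount d X : ℝ)) j (Function.update ω i y) =
      hybridDiff (fun X => (urnCount d X : ℝ)) j ω := by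
  simp only [hybridDiff, hybrid_succ, Function.update_of_ne hij]
  exact update_hybrid_update_of_not_touches d j hij le_rfl h

theorem touches_self (i : Fin n) (ω : Fin n → Fin m × Fin m) (y : Fin m × Fin m) :
    Touches i ω y i := by
  simp [Touches, zone]

theorem touches_update_iff {i j : Fin n} (hij : j ≠ i) (ω : Fin n → Fin m × Fin m)
    (y : Fin m × Fin m) : Touches i (Function.update ω i y) (ω i) j ↔ Touches i ω y j := by
  simp only [Touches, zone, Function.update_of_ne hij, Function.update_self, Finset.mem_insert,
    Finset.mem_singleton]
  tauto

/-- The number of balls touching the zone of ball `i` whose resampling changes the urn count. -/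
noncomputable def influence (d : ℕ) (i : Fin n) (ω : Fin n → Fin m × Fin m)
    (y : Fin m × Fin m) : ℝ :=
  ∑ j, if resampleDiff (fun X => (urnCount d X : ℝ)) j ω ≠ 0 ∧ Touches i ω y j then 1 else 0

/-- The sum over the balls of a function of the two increments of the urn count. -/
noncomputable def pairSum (d : ℕ) (ψ : ℝ → ℝ → ℝ) (ω : Fin n → Fin m × Fin m) : ℝ :=
  ∑ j, ψ (hybridDiff (fun X => (urnCount d X : ℝ)) j ω)
    (resampleDiff (fun X => (urnCount d X : ℝ)) j ω)

theorem abs_hybridDiff_le_two (d : ℕ) (j : Fin n) (ω : Fin n → Fin m × Fin m) :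
    |hybridDiff (fun X => (urnCount d X : ℝ)) j ω| ≤ 2 := by
  rw [hybridDiff, hybrid_succ]
  exact abs_urnCount_sub_update_le _ _ _ _

theorem abs_resampleDiff_le_two (d : ℕ) (j : Fin n) (ω : Fin n → Fin m × Fin m) :
    |resampleDiff (fun X => (urnCount d X : ℝ)) j ω| ≤ 2 :=
  abs_urnCount_sub_update_le _ _ _ _

theorem abs_pairSum_sub_update_le (d : ℕ) {ψ : ℝ → ℝ → ℝ} (hψ : ∀ x y, |ψ x y| ≤ |x| * |y|)
    (i : Fin n) (ω : Fin n → Fin m × Fin m) (y : Fin m × Fin m) :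
    |pairSum d ψ ω - pairSum d ψ (Function.update ω i y)| ≤
      4 * influence d i ω y + 4 * influence d i (Function.update ω i y) (ω i) := by
  have hb : ∀ (j : Fin n) (ω : Fin n → Fin m × Fin m),
      |ψ (hybridDiff (fun X => (urnCount d X : ℝ)) j ω)
        (resampleDiff (fun X => (urnCount d X : ℝ)) j ω)| ≤
      4 * if resampleDiff (fun X => (urnCount d X : ℝ)) j ω ≠ 0 then 1 else 0 := by
    intro j ω
    refine (hψ _ _).trans ?_
    split_ifs with h
    · nlinarith [abs_hybridDiff_le_two d j ω, abs_resampleDiff_le_two d j ω, abs_nonneg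
        (hybridDiff (fun X => (urnCount d X : ℝ)) j ω), abs_nonneg
        (resampleDiff (fun X => (urnCount d X : ℝ)) j ω)]
    · push Not at h
      simp [h]
  simp only [pairSum, influence]
  rw [← Finset.sum_sub_distrib, Finset.mul_sum, Finset.mul_sum, ← Finset.sum_add_distrib]
  refine (Finset.abs_sum_le_sum_abs _ _).trans (Finset.sum_le_sum fun j _ => ?_)
  by_cases ht : Touches i ω y j
  · have ht' : Touches i (Function.update ω i y) (ω i) j := by
      by_cases hij : j = i
      · subst hij
        exact touches_self _ _ _
      · exact (touches_update_iff hij ω y).2 ht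
    simp only [ht, ht', and_true]
    exact (abs_sub _ _).trans (add_le_add (hb j ω) (hb j _))
  · have hij : j ≠ i := by
      rintro rfl
      exact ht (touches_self _ _ _)
    rw [hybridDiff_update_of_not_touches d hij ht, resampleDiff_update_of_not_touches d hij ht,
      sub_self, abs_zero]
    positivity

end Locality

/-! ### Second moment of the influence -/

section Influence

variable {n : ℕ}

theorem expect_mul_le_of_update {β : Type*} [Fintype β] [Nonempty β] (l : Fin n)
    (A g : (Fin n → β) → ℝ) (c : ℝ) (hA : ∀ ω, 0 ≤ A ω)
    (hinv : ∀ ω x, A (Function.update ω l x) = A ω)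
    (hg : ∀ ω, 𝔼 x, g (Function.update ω l x) ≤ c) :
    𝔼 ω, A ω * g ω ≤ c * 𝔼 ω, A ω := by
  rw [← expect_update l, Finset.mul_expect]
  refine Finset.expect_le_expect fun ω _ => ?_
  simp only [hinv]
  rw [← Finset.mul_expect, mul_comm]
  exact mul_le_mul_of_nonneg_right (hg ω) (hA ω)

variable {m : ℕ}

theorem expect_fst_eq [NeZero m] (u : Fin m) :
    𝔼 x : Fin m × Fin m, (if x.1 = u then (1 : ℝ) else 0) = 1 / m := by
  rw [← Finset.univ_product_univ, Finset.expect_product, Finset.expect_comm]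
  simp

theorem expect_snd_eq [NeZero m] (u : Fin m) :
    𝔼 x : Fin m × Fin m, (if x.2 = u then (1 : ℝ) else 0) = 1 / m := by
  rw [← Finset.univ_product_univ, Finset.expect_product]
  simp

theorem expect_mem_or_mem_le [NeZero m] (τ : Finset (Fin m)) :
    𝔼 x : Fin m × Fin m, (if x.1 ∈ τ ∨ x.2 ∈ τ then (1 : ℝ) else 0) ≤ 2 * τ.card / m := by
  calc _ ≤ 𝔼 x : Fin m × Fin m, ∑ u ∈ τ,
        ((if x.1 = u then (1 : ℝ) else 0) + if x.2 = u then 1 else 0) := by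
        refine Finset.expect_le_expect fun x _ => ?_
        simp only [Finset.sum_add_distrib, Finset.sum_ite_eq]
        split_ifs <;> simp_all
    _ = ∑ u ∈ τ, (1 / m + 1 / m : ℝ) := by
        rw [Finset.expect_sum_comm]
        simp only [Finset.expect_add_distrib, expect_fst_eq, expect_snd_eq]
    _ = 2 * τ.card / m := by
        rw [Finset.sum_const, nsmul_eq_mul]
        ring

/-- The indicator that every ball of `K` has its first copy in the urn `u ω`. -/
noncomputable def allIn (K : Finset (Fin n)) (u : (Fin n → Fin m × Fin m) → Fin m)
    (ω : Fin n → Fin m × Fin m) : ℝ :=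
  if ∀ l ∈ K, (ω l).1 = u ω then 1 else 0

/-- The indicator of `Touches`. -/
noncomputable def touchInd (i : Fin n) (y : Fin m × Fin m) (j : Fin n)
    (ω : Fin n → Fin m × Fin m) : ℝ :=
  if Touches i ω y j then 1 else 0

theorem allIn_nonneg (K : Finset (Fin n)) (u : (Fin n → Fin m × Fin m) → Fin m)
    (ω : Fin n → Fin m × Fin m) : 0 ≤ allIn K u ω := by
  unfold allIn
  split_ifs <;> norm_num

theorem touchInd_nonneg (i : Fin n) (y : Fin m × Fin m) (j : Fin n)
    (ω : Fin n → Fin m × Fin m) : 0 ≤ touchInd i y j ω := by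
  unfold touchInd
  split_ifs <;> norm_num

theorem touchInd_le_one (i : Fin n) (y : Fin m × Fin m) (j : Fin n)
    (ω : Fin n → Fin m × Fin m) : touchInd i y j ω ≤ 1 := by
  unfold touchInd
  split_ifs <;> norm_num

theorem touchInd_update (i : Fin n) (y : Fin m × Fin m) {j l : Fin n} (hi : l ≠ i) (hj : l ≠ j)
    (ω : Fin n → Fin m × Fin m) (x : Fin m × Fin m) :
    touchInd i y j (Function.update ω l x) = touchInd i y j ω := by
  simp [touchInd, Touches, zone, Function.update_of_ne hi.symm, Function.update_of_ne hj.symm]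

theorem allIn_update {K : Finset (Fin n)} {l : Fin n} (hl : l ∉ K)
    {u : (Fin n → Fin m × Fin m) → Fin m} (ω : Fin n → Fin m × Fin m) (x : Fin m × Fin m)
    (hu : u (Function.update ω l x) = u ω) :
    allIn K u (Function.update ω l x) = allIn K u ω := by
  unfold allIn
  rw [hu]
  have : (∀ k ∈ K, (Function.update ω l x k).1 = u ω) ↔ ∀ k ∈ K, (ω k).1 = u ω := by
    refine forall₂_congr fun k hk => ?_
    rw [Function.update_of_ne fun e : k = l => hl (e ▸ hk)]
  simp only [this]

theorem expect_touchInd_update_le [NeZero m] (i : Fin n) (y : Fin m × Fin m) {k : Fin n}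
    (hk : k ≠ i) (ω : Fin n → Fin m × Fin m) :
    𝔼 x, touchInd i y k (Function.update ω k x) ≤ 8 / m := by
  have h : ∀ x, touchInd i y k (Function.update ω k x) =
      if x.1 ∈ zone i ω y ∨ x.2 ∈ zone i ω y then (1 : ℝ) else 0 := by
    intro x
    simp [touchInd, Touches, zone, Function.update_of_ne hk.symm]
  simp only [h]
  refine (expect_mem_or_mem_le _).trans ?_
  have hc : ((zone i ω y).card : ℝ) ≤ 4 := by exact_mod_cast Finset.card_le_four
  gcongr
  linarith

theorem expect_mul_allIn_le [NeZero m] (K : Finset (Fin n)) (B : (Fin n → Fin m × Fin m) → ℝ)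
    (u : (Fin n → Fin m × Fin m) → Fin m) (hB : ∀ ω, 0 ≤ B ω)
    (hBK : ∀ l ∈ K, ∀ ω x, B (Function.update ω l x) = B ω)
    (huK : ∀ l ∈ K, ∀ ω x, u (Function.update ω l x) = u ω) :
    𝔼 ω, B ω * allIn K u ω ≤ (1 / m : ℝ) ^ K.card * 𝔼 ω, B ω := by
  induction K using Finset.induction_on with
  | empty => simp [allIn]
  | insert l K hl ih =>
    have ih' := ih (fun k hk => hBK k (Finset.mem_insert_of_mem hk))
      (fun k hk => huK k (Finset.mem_insert_of_mem hk))
    have hl' := Finset.mem_insert_self l K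
    have hsplit : ∀ ω, B ω * allIn (insert l K) u ω =
        (B ω * allIn K u ω) * (if (ω l).1 = u ω then 1 else 0) := by
      intro ω
      unfold allIn
      by_cases h1 : (ω l).1 = u ω <;> by_cases h2 : ∀ k ∈ K, (ω k).1 = u ω <;>
        simp [h1, h2]
    simp only [hsplit]
    rw [Finset.card_insert_of_notMem hl, pow_succ', mul_assoc]
    refine (expect_mul_le_of_update l (fun ω => B ω * allIn K u ω) _ (1 / m)
      (fun ω => mul_nonneg (hB ω) (allIn_nonneg _ _ _)) (fun ω x => ?_) (fun ω => ?_)).trans ?_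
    · rw [hBK l hl', allIn_update hl ω x (huK l hl' ω x)]
    · simp only [Function.update_self, huK l hl']
      exact (expect_fst_eq _).le
    · gcongr

/-- The indicator that all the balls of `K` share the urn given by `s` of ball `j`. -/
noncomputable def shares (s : Fin m × Fin m → Fin m) (j : Fin n) (K : Finset (Fin n))
    (ω : Fin n → Fin m × Fin m) : ℝ :=
  allIn K (fun ω => s (ω j)) ω

theorem expect_shares_mul_touchInd_le [NeZero m] (s : Fin m × Fin m → Fin m) (i : Fin n)
    (y : Fin m × Fin m) (j : Fin n) (K : Finset (Fin n)) (hj : j ∉ K) :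
    𝔼 ω, shares s j K ω * touchInd i y j ω ≤
      (1 / m : ℝ) ^ K.card * ((if j = i then 1 else 0) + (if i ∈ K then 1 else 0) + 8 / m) := by
  have hne : ∀ l ∈ K, j ≠ l := fun l hl e => hj (e ▸ hl)
  have hu : ∀ l ∈ K, ∀ (ω : Fin n → Fin m × Fin m) x,
      (fun ω => s (ω j)) (Function.update ω l x) = (fun ω => s (ω j)) ω := by
    intro l hl ω x
    simp [Function.update_of_ne (hne l hl)]
  have hm : (0 : ℝ) ≤ 8 / m := by positivity
  by_cases hc : j = i ∨ i ∈ K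
  · have h1 := expect_mul_allIn_le K (fun _ => 1) (fun ω => s (ω j)) (fun _ => zero_le_one)
      (fun _ _ _ _ => rfl) hu
    calc _ ≤ 𝔼 ω, 1 * allIn K (fun ω => s (ω j)) ω := by
          refine Finset.expect_le_expect fun ω _ => ?_
          rw [one_mul]
          exact mul_le_of_le_one_right (allIn_nonneg _ _ _) (touchInd_le_one _ _ _ _)
      _ ≤ (1 / m : ℝ) ^ K.card * 1 := by simpa using h1
      _ ≤ _ := by
          gcongr
          rcases hc with hc | hc
          · rw [if_pos hc]
            split_ifs <;> linarith
          · rw [if_pos hc]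
            split_ifs <;> linarith
  · rw [not_or] at hc
    have h1 := expect_mul_allIn_le K (touchInd i y j) (fun ω => s (ω j)) (touchInd_nonneg i y j)
      (fun l hl ω x => touchInd_update i y (fun e => hc.2 (e ▸ hl)) (hne l hl).symm ω x) hu
    have h2 := expect_mul_le_of_update j (fun _ => 1) (touchInd i y j) (8 / m)
      (fun _ => zero_le_one) (fun _ _ => rfl) (expect_touchInd_update_le i y hc.1)
    simp only [one_mul, Finset.expect_const Finset.univ_nonempty, mul_one] at h2
    rw [if_neg hc.1, if_neg hc.2, add_zero, zero_add]
    calc _ = 𝔼 ω, touchInd i y j ω * allIn K (fun ω => s (ω j)) ω := by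
          simp only [shares, mul_comm]
      _ ≤ _ := h1
      _ ≤ _ := by gcongr

theorem expect_shares_mul_touchInd_mul_le [NeZero m] (s : Fin m × Fin m → Fin m) (i : Fin n)
    (y : Fin m × Fin m) (j k : Fin n) (K : Finset (Fin n)) :
    𝔼 ω, shares s j K ω * touchInd i y j ω * touchInd i y k ω ≤
      ((if k ∈ insert i (insert j K) then 1 else 0) + 8 / m) *
        𝔼 ω, shares s j K ω * touchInd i y j ω := by
  have h0 : ∀ ω, 0 ≤ shares s j K ω * touchInd i y j ω := fun ω =>
    mul_nonneg (allIn_nonneg _ _ _) (touchInd_nonneg _ _ _ _)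
  by_cases hk : k ∈ insert i (insert j K)
  · rw [if_pos hk]
    calc _ ≤ 𝔼 ω, shares s j K ω * touchInd i y j ω :=
          Finset.expect_le_expect fun ω _ => mul_le_of_le_one_right (h0 ω) (touchInd_le_one _ _ _ _)
      _ ≤ _ := by
          refine le_mul_of_one_le_left (Finset.expect_nonneg fun ω _ => h0 ω) ?_
          have : (0 : ℝ) ≤ 8 / m := by positivity
          linarith
  · rw [if_neg hk, zero_add]
    simp only [Finset.mem_insert, not_or] at hk
    refine expect_mul_le_of_update k _ _ _ h0 (fun ω x => ?_)
      (expect_touchInd_update_le i y hk.1)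
    rw [touchInd_update i y hk.1 hk.2.1, shares, allIn_update hk.2.2, shares]
    rw [Function.update_of_ne (Ne.symm hk.2.1)]

theorem resampleDiff_ne_zero_le (d : ℕ) (j : Fin n) (ω : Fin n → Fin m × Fin m) :
    (if resampleDiff (fun X => (urnCount d X : ℝ)) j ω ≠ 0 then (1 : ℝ) else 0) ≤
      ∑ K ∈ (Finset.univ.erase j).powersetCard (d - 1),
        (shares Prod.fst j K ω + shares Prod.snd j K ω) := by
  have hnn : ∀ K, 0 ≤ shares Prod.fst j K ω + shares Prod.snd j K ω := fun K =>
    add_nonneg (allIn_nonneg _ _ _) (allIn_nonneg _ _ _)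
  split_ifs with h
  · obtain ⟨K, hK, hor⟩ := exists_subset_of_urnCount_ne h
    refine le_trans ?_ (Finset.single_le_sum (fun K _ => hnn K) hK)
    rcases hor with hor | hor
    · have : shares Prod.fst j K ω = 1 := if_pos hor
      linarith [allIn_nonneg K (fun ω => (ω j).2) ω, show shares Prod.snd j K ω =
        allIn K (fun ω => (ω j).2) ω from rfl]
    · have : shares Prod.snd j K ω = 1 := if_pos hor
      linarith [allIn_nonneg K (fun ω => (ω j).1) ω, show shares Prod.fst j K ω =
        allIn K (fun ω => (ω j).1) ω from rfl]
  · exact Finset.sum_nonneg fun K _ => hnn K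

theorem influence_sq_le (d : ℕ) (i : Fin n) (ω : Fin n → Fin m × Fin m) (y : Fin m × Fin m) :
    influence d i ω y ^ 2 ≤
      ∑ j, ∑ K ∈ (Finset.univ.erase j).powersetCard (d - 1), ∑ k,
        (shares Prod.fst j K ω * touchInd i y j ω * touchInd i y k ω +
          shares Prod.snd j K ω * touchInd i y j ω * touchInd i y k ω) := by
  have h1 : influence d i ω y = ∑ j,
      (if resampleDiff (fun X => (urnCount d X : ℝ)) j ω ≠ 0 then (1 : ℝ) else 0) *
        touchInd i y j ω := by
    unfold influence touchInd
    refine Finset.sum_congr rfl fun j _ => ?_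
    by_cases h1 : resampleDiff (fun X => (urnCount d X : ℝ)) j ω = 0 <;>
      by_cases h2 : Touches i ω y j <;> simp [h1, h2]
  have h2 : influence d i ω y ≤ ∑ k, touchInd i y k ω := by
    rw [h1]
    refine Finset.sum_le_sum fun j _ => mul_le_of_le_one_left (touchInd_nonneg _ _ _ _) ?_
    split_ifs <;> norm_num
  have h3 : influence d i ω y ≤ ∑ j, (∑ K ∈ (Finset.univ.erase j).powersetCard (d - 1),
        (shares Prod.fst j K ω + shares Prod.snd j K ω)) * touchInd i y j ω := by
    rw [h1]
    exact Finset.sum_le_sum fun j _ =>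
      mul_le_mul_of_nonneg_right (resampleDiff_ne_zero_le d j ω) (touchInd_nonneg _ _ _ _)
  have h4 : 0 ≤ influence d i ω y := by
    rw [h1]
    refine Finset.sum_nonneg fun j _ => mul_nonneg ?_ (touchInd_nonneg _ _ _ _)
    split_ifs <;> norm_num
  rw [sq]
  refine (mul_le_mul h3 h2 h4 (h4.trans h3)).trans (le_of_eq ?_)
  rw [Finset.sum_mul]
  refine Finset.sum_congr rfl fun j _ => ?_
  rw [mul_assoc, Finset.sum_mul]
  simp only [Finset.mul_sum]
  refine Finset.sum_congr rfl fun K _ => Finset.sum_congr rfl fun k _ => by ring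

theorem card_powersetCard_filter_mem_le (i : Fin n) (r : ℕ) :
    (((Finset.univ : Finset (Fin n)).powersetCard r).filter fun K => i ∈ K).card ≤
      n ^ (r - 1) := by
  calc _ ≤ ((Finset.univ : Finset (Fin n)).powersetCard (r - 1)).card := by
        refine Finset.card_le_card_of_injOn (fun K => K.erase i) (fun K hK => ?_) ?_
        · simp only [Finset.coe_filter, Set.mem_ofPred_eq, Finset.mem_powersetCard] at hK
          simp [Finset.mem_powersetCard, Finset.card_erase_of_mem hK.2, hK.1.2]
        · intro K hK L hL h
          simp only [Finset.coe_filter, Set.mem_ofPred_eq] at hK hL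
          rw [← Finset.insert_erase hK.2, ← Finset.insert_erase hL.2]
          exact congrArg (insert i) h
    _ = n.choose (r - 1) := by simp
    _ ≤ n ^ (r - 1) := Nat.choose_le_pow _ _

theorem sum_incidence_le (i : Fin n) (r : ℕ) (hr : 1 ≤ r) (c : ℝ) (hc : 0 ≤ c) :
    ∑ j : Fin n, ∑ K ∈ (Finset.univ.erase j).powersetCard r,
      ((if j = i then 1 else 0) + (if i ∈ K then 1 else 0) + c) ≤
      (2 + c * n) * (n : ℝ) ^ r := by
  have hcard : ∀ j : Fin n,
      (((Finset.univ.erase j).powersetCard r).card : ℝ) ≤ (n : ℝ) ^ r := by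
    intro j
    have : ((Finset.univ.erase j).powersetCard r).card ≤ n ^ r :=
      (Finset.card_le_card (Finset.powersetCard_mono (Finset.erase_subset _ _))).trans
        (by simpa using Nat.choose_le_pow n r)
    exact_mod_cast this
  have hmem : ∀ j : Fin n, ∑ K ∈ (Finset.univ.erase j).powersetCard r,
      (if i ∈ K then (1 : ℝ) else 0) ≤ (n : ℝ) ^ (r - 1) := by
    intro j
    rw [Finset.sum_boole]
    have := (Finset.card_le_card (Finset.filter_subset_filter (fun K => i ∈ K)
      (Finset.powersetCard_mono (n := r) (Finset.erase_subset j Finset.univ)))).trans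
      (card_powersetCard_filter_mem_le i r)
    exact_mod_cast this
  calc _ ≤ ∑ j : Fin n, ((if j = i then (n : ℝ) ^ r else 0) + (n : ℝ) ^ (r - 1) +
        c * (n : ℝ) ^ r) := by
        refine Finset.sum_le_sum fun j _ => ?_
        simp only [Finset.sum_add_distrib, Finset.sum_const, nsmul_eq_mul]
        refine add_le_add (add_le_add ?_ (hmem j)) ?_
        · split_ifs
          · simpa using hcard j
          · simp
        · rw [mul_comm]
          exact mul_le_mul_of_nonneg_left (hcard j) hc
    _ = _ := by
        simp only [Finset.sum_add_distrib, Finset.sum_ite_eq', Finset.mem_univ, if_true,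
          Finset.sum_const, Finset.card_univ, Fintype.card_fin, nsmul_eq_mul]
        rw [← pow_succ', Nat.sub_add_cancel hr]
        ring

theorem expect_influence_sq_le [NeZero m] (d : ℕ) (hd : 2 ≤ d) (i : Fin n) (y : Fin m × Fin m) :
    𝔼 ω, influence d i ω y ^ 2 ≤
      2 * (d + 1 + 8 * (n / m)) * (2 + 8 * (n / m)) * ((n : ℝ) / m) ^ (d - 1) := by
  have hs : ∀ (s : Fin m × Fin m → Fin m) (j : Fin n),
      ∀ K ∈ (Finset.univ.erase j).powersetCard (d - 1),
      ∑ k, 𝔼 ω, shares s j K ω * touchInd i y j ω * touchInd i y k ω ≤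
        (d + 1 + 8 * (n / m)) * ((1 / m : ℝ) ^ (d - 1) *
          ((if j = i then 1 else 0) + (if i ∈ K then 1 else 0) + 8 / m)) := by
    intro s j K hK
    rw [Finset.mem_powersetCard] at hK
    have hj : j ∉ K := fun h => absurd (hK.1 h) (by simp)
    have h1 := expect_shares_mul_touchInd_le s i y j K hj
    rw [hK.2] at h1
    have hcard : ((insert i (insert j K)).card : ℝ) ≤ d + 1 := by
      have := Finset.card_insert_le i (insert j K)
      have := Finset.card_insert_le j K
      have : (insert i (insert j K)).card ≤ d + 1 := by omega
      exact_mod_cast this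
    calc _ ≤ ∑ k, ((if k ∈ insert i (insert j K) then 1 else 0) + 8 / m) *
          𝔼 ω, shares s j K ω * touchInd i y j ω :=
          Finset.sum_le_sum fun k _ => expect_shares_mul_touchInd_mul_le s i y j k K
      _ = ((insert i (insert j K)).card + 8 * (n / m)) *
          𝔼 ω, shares s j K ω * touchInd i y j ω := by
          rw [← Finset.sum_mul, Finset.sum_add_distrib, Finset.sum_boole,
            Finset.filter_univ_mem, Finset.sum_const, Finset.card_univ, Fintype.card_fin,
            nsmul_eq_mul]
          ring
      _ ≤ _ := by
          refine mul_le_mul (by linarith) h1 (Finset.expect_nonneg fun ω _ =>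
            mul_nonneg (allIn_nonneg _ _ _) (touchInd_nonneg _ _ _ _)) (by positivity)
  calc _ ≤ 𝔼 ω, ∑ j, ∑ K ∈ (Finset.univ.erase j).powersetCard (d - 1), ∑ k,
        (shares Prod.fst j K ω * touchInd i y j ω * touchInd i y k ω +
          shares Prod.snd j K ω * touchInd i y j ω * touchInd i y k ω) :=
        Finset.expect_le_expect fun ω _ => influence_sq_le d i ω y
    _ = ∑ j, ∑ K ∈ (Finset.univ.erase j).powersetCard (d - 1),
        (∑ k, (𝔼 ω, shares Prod.fst j K ω * touchInd i y j ω * touchInd i y k ω) +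
          ∑ k, 𝔼 ω, shares Prod.snd j K ω * touchInd i y j ω * touchInd i y k ω) := by
        rw [Finset.expect_sum_comm]
        refine Finset.sum_congr rfl fun j _ => ?_
        rw [Finset.expect_sum_comm]
        refine Finset.sum_congr rfl fun K _ => ?_
        rw [Finset.expect_sum_comm, ← Finset.sum_add_distrib]
        exact Finset.sum_congr rfl fun k _ => Finset.expect_add_distrib _ _ _
    _ ≤ ∑ j, ∑ K ∈ (Finset.univ.erase j).powersetCard (d - 1),
        (2 * (d + 1 + 8 * (n / m)) * (1 / m : ℝ) ^ (d - 1)) *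
          ((if j = i then 1 else 0) + (if i ∈ K then 1 else 0) + 8 / m) := by
        refine Finset.sum_le_sum fun j _ => Finset.sum_le_sum fun K hK => ?_
        refine (add_le_add (hs Prod.fst j K hK) (hs Prod.snd j K hK)).trans (le_of_eq ?_)
        ring
    _ ≤ (2 * (d + 1 + 8 * (n / m)) * (1 / m : ℝ) ^ (d - 1)) *
        ((2 + 8 / m * n) * (n : ℝ) ^ (d - 1)) := by
        simp only [← Finset.mul_sum]
        gcongr
        exact sum_incidence_le i (d - 1) (by omega) (8 / m) (by positivity)
    _ = _ := by
        rw [div_pow, div_pow, one_pow]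
        ring

theorem variance_pairSum_le [NeZero m] (d : ℕ) (hd : 2 ≤ d) {ψ : ℝ → ℝ → ℝ}
    (hψ : ∀ x y, |ψ x y| ≤ |x| * |y|) :
    𝔼 ω : Fin n → Fin m × Fin m, pairSum d ψ ω ^ 2 -
        (𝔼 ω : Fin n → Fin m × Fin m, pairSum d ψ ω) ^ 2 ≤
      64 * (d + 1 + 8 * (n / m)) * (2 + 8 * (n / m)) * (m * ((n : ℝ) / m) ^ d) := by
  have hm : (m : ℝ) ≠ 0 := Nat.cast_ne_zero.2 (NeZero.ne m)
  set R : ℝ := 2 * (d + 1 + 8 * (n / m)) * (2 + 8 * (n / m)) * ((n : ℝ) / m) ^ (d - 1) with hR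
  have hbound : ∀ i : Fin n, 𝔼 ω : Fin n → Fin m × Fin m, 𝔼 y, influence d i ω y ^ 2 ≤ R := by
    intro i
    rw [Finset.expect_comm]
    calc _ ≤ 𝔼 _y : Fin m × Fin m, R :=
          Finset.expect_le_expect fun y _ => expect_influence_sq_le d hd i y
      _ = R := Finset.expect_const Finset.univ_nonempty _
  refine (efron_stein _).trans ?_
  calc _ ≤ ∑ i : Fin n, (𝔼 ω : Fin n → Fin m × Fin m, 𝔼 y,
        (32 * influence d i ω y ^ 2 +
          32 * influence d i (Function.update ω i y) (ω i) ^ 2)) / 2 := by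
        gcongr with i _ ω _ y _
        have h := abs_pairSum_sub_update_le d hψ i ω y
        rw [← sq_abs]
        nlinarith [sq_nonneg (influence d i ω y - influence d i (Function.update ω i y) (ω i)),
          abs_nonneg (pairSum d ψ ω - pairSum d ψ (Function.update ω i y))]
    _ = ∑ i : Fin n, 32 * 𝔼 ω : Fin n → Fin m × Fin m, 𝔼 y, influence d i ω y ^ 2 := by
        refine Finset.sum_congr rfl fun i _ => ?_
        simp only [Finset.expect_add_distrib, ← Finset.mul_expect]
        rw [expect_update_swap i fun ω y => influence d i ω y ^ 2]
        ring
    _ ≤ ∑ _i : Fin n, 32 * R := Finset.sum_le_sum fun i _ => by linarith [hbound i]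
    _ = _ := by
        rw [Finset.sum_const, Finset.card_univ, Fintype.card_fin, nsmul_eq_mul, hR]
        have : (m : ℝ) * ((n : ℝ) / m) ^ d = n * ((n : ℝ) / m) ^ (d - 1) := by
          conv_lhs => rw [← Nat.sub_add_cancel (show 1 ≤ d by omega), pow_succ]
          field_simp
        rw [this]
        ring

end Influence

/-! ### Lower bound for the variance -/

section LowerBound

theorem variance_ge_of_orthogonal {Ω ι : Type*} [Fintype Ω] [Nonempty Ω] [DecidableEq ι]
    (Y : Ω → ℝ) (I : Finset ι) (g : ι → Ω → ℝ) (h0 : ∀ x ∈ I, 𝔼 ω, g x ω = 0)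
    (h1 : ∀ x ∈ I, 𝔼 ω, Y ω * g x ω = (𝔼 ω, g x ω ^ 2) / 2)
    (h2 : ∀ x ∈ I, ∀ x' ∈ I, x ≠ x' → 𝔼 ω, g x ω * g x' ω = 0) :
    (∑ x ∈ I, 𝔼 ω, g x ω ^ 2) / 4 ≤ 𝔼 ω, Y ω ^ 2 - (𝔼 ω, Y ω) ^ 2 := by
  set μ := 𝔼 ω, Y ω with hμ
  set E := ∑ x ∈ I, 𝔼 ω, g x ω ^ 2 with hE
  have e0 : 𝔼 ω, ∑ x ∈ I, g x ω = 0 := by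
    rw [Finset.expect_sum_comm]
    exact Finset.sum_eq_zero h0
  have e1 : 𝔼 ω, Y ω * ∑ x ∈ I, g x ω = E / 2 := by
    simp only [Finset.mul_sum]
    rw [Finset.expect_sum_comm, hE, Finset.sum_div]
    exact Finset.sum_congr rfl h1
  have e2 : 𝔼 ω, (∑ x ∈ I, g x ω) ^ 2 = E := by
    simp only [sq, Finset.sum_mul_sum]
    rw [Finset.expect_sum_comm, hE]
    refine Finset.sum_congr rfl fun x hx => ?_
    rw [Finset.expect_sum_comm, Finset.sum_eq_single x]
    · simp only [sq]
    · exact fun x' hx' hne => h2 x hx x' hx' hne.symm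
    · exact fun h => absurd hx h
  have hsq : 0 ≤ 𝔼 ω, (Y ω - μ - (∑ x ∈ I, g x ω) / 2) ^ 2 :=
    Finset.expect_nonneg fun ω _ => sq_nonneg _
  have hexp : 𝔼 ω, (Y ω - μ - (∑ x ∈ I, g x ω) / 2) ^ 2 =
      𝔼 ω, (Y ω ^ 2 + (-2 * μ) * Y ω + μ ^ 2 + (-1) * (Y ω * ∑ x ∈ I, g x ω) +
        μ * (∑ x ∈ I, g x ω) + (1 / 4) * (∑ x ∈ I, g x ω) ^ 2) :=
    Finset.expect_congr rfl fun ω _ => by ring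
  rw [hexp] at hsq
  simp only [Finset.expect_add_distrib, ← Finset.mul_expect, e0, e1, e2, ← hμ,
    Finset.expect_const Finset.univ_nonempty] at hsq
  linarith

variable {n m : ℕ}

/-- Move ball `j` between the urns `p` and `q`, if it lies in one of them. -/
def toggle (p q : Fin m) (j : Fin n) (ω : Fin n → Fin m) : Fin n → Fin m :=
  Function.update ω j (Equiv.swap p q (ω j))

theorem toggle_involutive (p q : Fin m) (j : Fin n) : Function.Involutive (toggle p q j) := by
  intro ω
  simp [toggle]

theorem expect_toggle (p q : Fin m) (j : Fin n) (g : (Fin n → Fin m) → ℝ) :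
    𝔼 ω, g (toggle p q j ω) = 𝔼 ω, g ω :=
  Fintype.expect_equiv (toggle_involutive p q j).toPerm _ _ fun _ => rfl

/-- The signed indicator that the balls of `S` other than `j` are in urn `p`, the balls outside
`S` avoid the urns `p` and `q`, and ball `j` is in `p` (sign `+`) or in `q` (sign `-`). -/
noncomputable def toggleTest (p q : Fin m) (S : Finset (Fin n)) (j : Fin n)
    (ω : Fin n → Fin m) : ℝ :=
  if (∀ l ∈ S, l ≠ j → ω l = p) ∧ ∀ l ∉ S, ω l ≠ p ∧ ω l ≠ q then
    (if ω j = p then 1 else 0) - if ω j = q then 1 else 0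
  else 0

theorem toggleTest_toggle {p q : Fin m} {S : Finset (Fin n)} {j : Fin n}
    (hj : j ∈ S) (ω : Fin n → Fin m) :
    toggleTest p q S j (toggle p q j ω) = -toggleTest p q S j ω := by
  have h1 : (∀ l ∈ S, l ≠ j → toggle p q j ω l = p) ↔ ∀ l ∈ S, l ≠ j → ω l = p := by
    refine forall₃_congr fun l _ hl => ?_
    rw [toggle, Function.update_of_ne hl]
  have h2 : (∀ l ∉ S, toggle p q j ω l ≠ p ∧ toggle p q j ω l ≠ q) ↔
      ∀ l ∉ S, ω l ≠ p ∧ ω l ≠ q := by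
    refine forall₂_congr fun l hl => ?_
    rw [toggle, Function.update_of_ne fun e : l = j => hl (e ▸ hj)]
  have h3 : toggle p q j ω j = p ↔ ω j = q := by
    simp [toggle, Equiv.swap_apply_eq_iff]
  have h4 : toggle p q j ω j = q ↔ ω j = p := by
    simp [toggle, Equiv.swap_apply_eq_iff]
  simp only [toggleTest, h1, h2, h3, h4]
  split_ifs <;> ring

theorem toggleTest_toggle_of_ne {p q p' q' : Fin m} (S : Finset (Fin n)) (j j' : Fin n)
    (h1 : p ≠ p') (h2 : p ≠ q') (h3 : q ≠ p') (h4 : q ≠ q') (ω : Fin n → Fin m) :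
    toggleTest p q S j (toggle p' q' j' ω) = toggleTest p q S j ω := by
  have hp : ∀ l, toggle p' q' j' ω l = p ↔ ω l = p := by
    intro l
    by_cases h : l = j'
    · subst h
      simp [toggle, Equiv.swap_apply_eq_iff, Equiv.swap_apply_of_ne_of_ne h1 h2]
    · simp [toggle, h]
  have hq : ∀ l, toggle p' q' j' ω l = q ↔ ω l = q := by
    intro l
    by_cases h : l = j'
    · subst h
      simp [toggle, Equiv.swap_apply_eq_iff, Equiv.swap_apply_of_ne_of_ne h3 h4]
    · simp [toggle, h]
  simp only [toggleTest, hp, hq, ne_eq]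

theorem eq_filter_of_toggleTest_ne_zero {p q : Fin m} {S : Finset (Fin n)} {j : Fin n}
    {ω : Fin n → Fin m} (h : toggleTest p q S j ω ≠ 0) :
    S = Finset.univ.filter fun l => ω l = p ∨ ω l = q := by
  unfold toggleTest at h
  split_ifs at h with h1 h2 h3 h3 <;> simp at h <;>
  · ext l
    simp only [Finset.mem_filter, Finset.mem_univ, true_and]
    constructor
    · intro hl
      by_cases hlj : l = j
      · subst hlj
        simp [*]
      · exact Or.inl (h1.1 l hl hlj)
    · intro hl
      by_contra hS
      have := h1.2 l hS
      tauto

theorem urnCount_sub_update_eq_one {d : ℕ} (hd : 2 ≤ d) {p q : Fin m} (hpq : p ≠ q)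
    {S : Finset (Fin n)} (hS : S.card = d) {j : Fin n} (hj : j ∈ S) {ω : Fin n → Fin m}
    (hin : ∀ l ∈ S, ω l = p) (hout : ∀ l ∉ S, ω l ≠ p ∧ ω l ≠ q) :
    (urnCount d ω : ℝ) - urnCount d (Function.update ω j q) = 1 := by
  have hp : ballCount ω p = d := by
    rw [← hS]
    unfold ballCount
    congr 1
    ext l
    by_cases hl : l ∈ S
    · simp [hl, hin l hl]
    · simp [hl, (hout l hl).1]
  have hq : ballCount ω q = 0 := by
    unfold ballCount
    rw [Finset.card_eq_zero, Finset.filter_eq_empty_iff]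
    intro l _
    by_cases hl : l ∈ S
    · rw [hin l hl]
      exact hpq
    · exact (hout l hl).2
  have hp' : ballCount (Function.update ω j q) p = d - 1 := by
    rw [← hS, ← Finset.card_erase_of_mem hj]
    unfold ballCount
    congr 1
    ext l
    by_cases hlj : l = j
    · subst hlj
      simp [hpq.symm]
    · by_cases hl : l ∈ S
      · simp [hl, hlj, hin l hl]
      · simp [hl, hlj, (hout l hl).1]
  have hq' : ballCount (Function.update ω j q) q = 1 := by
    unfold ballCount
    rw [Finset.card_eq_one]
    refine ⟨j, ?_⟩
    ext l
    by_cases hlj : l = j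
    · subst hlj
      simp
    · by_cases hl : l ∈ S
      · simp [hlj, hin l hl, hpq]
      · simp [hlj, (hout l hl).2]
  rw [urnCount_sub_update, hin j hj, Finset.sum_pair hpq, hp, hq, hp', hq', if_pos rfl,
    if_neg (by omega), if_neg (by omega), if_neg (by omega)]
  norm_num

theorem urnCount_sub_toggle_mul {d : ℕ} (hd : 2 ≤ d) {p q : Fin m} (hpq : p ≠ q)
    {S : Finset (Fin n)} (hS : S.card = d) {j : Fin n} (hj : j ∈ S) (ω : Fin n → Fin m) :
    ((urnCount d ω : ℝ) - urnCount d (toggle p q j ω)) * toggleTest p q S j ω =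
      toggleTest p q S j ω ^ 2 := by
  unfold toggleTest
  by_cases h : (∀ l ∈ S, l ≠ j → ω l = p) ∧ ∀ l ∉ S, ω l ≠ p ∧ ω l ≠ q
  · rw [if_pos h]
    by_cases hp : ω j = p
    · have hin : ∀ l ∈ S, ω l = p := by
        intro l hl
        by_cases hlj : l = j
        · rwa [hlj]
        · exact h.1 l hl hlj
      have := urnCount_sub_update_eq_one hd hpq hS hj hin h.2
      rw [toggle, hp, Equiv.swap_apply_left, this, if_pos rfl, if_neg hpq]
      norm_num
    · by_cases hq : ω j = q
      · have hin : ∀ l ∈ S, Function.update ω j p l = p := by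
          intro l hl
          by_cases hlj : l = j
          · simp [hlj]
          · simpa [hlj] using h.1 l hl hlj
        have hout : ∀ l ∉ S, Function.update ω j p l ≠ p ∧ Function.update ω j p l ≠ q := by
          intro l hl
          rw [Function.update_of_ne fun e : l = j => hl (e ▸ hj)]
          exact h.2 l hl
        have := urnCount_sub_update_eq_one hd hpq hS hj hin hout
        rw [Function.update_idem, ← hq, Function.update_eq_self] at this
        rw [toggle, if_neg hp, if_pos hq]
        rw [hq, Equiv.swap_apply_right]
        linear_combination this
      · simp [hp, hq]
  · simp [h]

theorem expect_toggleTest_sq_ge [NeZero m] {p q : Fin m} (hpq : p ≠ q) (S : Finset (Fin n))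
    {j : Fin n} (hj : j ∈ S) :
    ((m : ℝ) - 2) ^ (n - S.card) / (m : ℝ) ^ n ≤ 𝔼 ω, toggleTest p q S j ω ^ 2 := by
  set A : Finset (Fin n → Fin m) :=
    Fintype.piFinset fun l => if l ∈ S then {p} else {p, q}ᶜ with hA
  have hm : 2 ≤ m := by
    have := Finset.card_le_univ ({p, q} : Finset (Fin m))
    rwa [Finset.card_pair hpq, Fintype.card_fin] at this
  have hcard : (A.card : ℝ) = ((m : ℝ) - 2) ^ (n - S.card) := by
    rw [hA, Fintype.card_piFinset]
    simp only [apply_ite Finset.card, Finset.card_singleton, Finset.card_compl,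
      Finset.card_pair hpq, Fintype.card_fin]
    rw [Finset.prod_ite, Finset.prod_const_one, one_mul, Finset.prod_const,
      ← Finset.compl_filter, Finset.card_compl, Finset.filter_univ_mem, Fintype.card_fin,
      Nat.cast_pow, Nat.cast_sub hm, Nat.cast_ofNat]
  have hle : ∀ ω, (if ω ∈ A then (1 : ℝ) else 0) ≤ toggleTest p q S j ω ^ 2 := by
    intro ω
    split_ifs with h
    · rw [hA, Fintype.mem_piFinset] at h
      have hin : ∀ l ∈ S, ω l = p := fun l hl => by simpa [hl] using h l
      have hout : ∀ l ∉ S, ω l ≠ p ∧ ω l ≠ q := fun l hl => by simpa [hl] using h l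
      rw [toggleTest, if_pos ⟨fun l hl _ => hin l hl, hout⟩, hin j hj, if_pos rfl, if_neg hpq]
      norm_num
    · exact sq_nonneg _
  refine le_trans (le_of_eq ?_) (Finset.expect_le_expect fun ω _ => hle ω)
  rw [Fintype.expect_eq_sum_div_card, Finset.sum_boole, Finset.filter_univ_mem, hcard]
  simp

theorem variance_urnCount_ge_count [NeZero m] {d : ℕ} (hd : 2 ≤ d) :
    ((m / 2 : ℕ) : ℝ) * n.choose d * (((m : ℝ) - 2) ^ (n - d) / (m : ℝ) ^ n) / 4 ≤
      𝔼 ω : Fin n → Fin m, (urnCount d ω : ℝ) ^ 2 -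
        (𝔼 ω : Fin n → Fin m, (urnCount d ω : ℝ)) ^ 2 := by
  classical
  let p : Fin (m / 2) → Fin m := fun k => ⟨2 * k, by omega⟩
  let q : Fin (m / 2) → Fin m := fun k => ⟨2 * k + 1, by omega⟩
  have hpq : ∀ k k', p k ≠ q k' := by
    intro k k' h
    have := congrArg Fin.val h
    simp only [p, q] at this
    omega
  have hpp : ∀ k k', k ≠ k' → p k ≠ p k' := by
    intro k k' hk h
    have := congrArg Fin.val h
    simp only [p] at this
    exact hk (Fin.ext (by omega))
  have hqq : ∀ k k', k ≠ k' → q k ≠ q k' := by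
    intro k k' hk h
    have := congrArg Fin.val h
    simp only [q] at this
    exact hk (Fin.ext (by omega))
  let g : Fin (m / 2) × Finset (Fin n) → (Fin n → Fin m) → ℝ := fun x ω =>
    if h : x.2.Nonempty then toggleTest (p x.1) (q x.1) x.2 h.choose ω else 0
  have hg : ∀ (k) (S : Finset (Fin n)) (h : S.Nonempty),
      g (k, S) = toggleTest (p k) (q k) S h.choose := by
    intro k S h
    funext ω
    exact dif_pos h
  set I : Finset (Fin (m / 2) × Finset (Fin n)) :=
    Finset.univ ×ˢ (Finset.univ.powersetCard d) with hI
  have hmem : ∀ x ∈ I, x.2.card = d := fun x hx => by simpa [hI] using hx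
  have hne : ∀ x ∈ I, x.2.Nonempty := fun x hx => Finset.card_pos.1 (by rw [hmem x hx]; omega)
  have hvar := variance_ge_of_orthogonal (fun ω : Fin n → Fin m => (urnCount d ω : ℝ)) I g
    ?_ ?_ ?_
  · refine le_trans ?_ hvar
    gcongr
    calc _ = ∑ x ∈ I, ((m : ℝ) - 2) ^ (n - d) / (m : ℝ) ^ n := by
          rw [Finset.sum_const, hI, Finset.card_product]
          simp
      _ ≤ _ := by
          refine Finset.sum_le_sum fun x hx => ?_
          rw [hg x.1 x.2 (hne x hx)]
          have := expect_toggleTest_sq_ge (hpq x.1 x.1) x.2 (hne x hx).choose_spec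
          rwa [hmem x hx] at this
  · intro x hx
    have hj := (hne x hx).choose_spec
    have h := expect_toggle (p x.1) (q x.1) (hne x hx).choose (g x)
    rw [hg x.1 x.2 (hne x hx)] at h ⊢
    simp only [toggleTest_toggle hj, Finset.expect_neg_distrib] at h
    linarith
  · intro x hx
    have hj := (hne x hx).choose_spec
    have h := expect_toggle (p x.1) (q x.1) (hne x hx).choose
      (fun ω => (urnCount d ω : ℝ) * g x ω)
    rw [hg x.1 x.2 (hne x hx)] at h ⊢
    simp only [toggleTest_toggle hj, mul_neg, Finset.expect_neg_distrib] at h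
    simp only [← urnCount_sub_toggle_mul hd (hpq x.1 x.1) (hmem x hx) hj, sub_mul,
      Finset.expect_sub_distrib]
    linarith
  · rintro ⟨k, S⟩ hx ⟨k', S'⟩ hx' hxx
    have hj := (hne _ hx).choose_spec
    rw [hg k S (hne _ hx), hg k' S' (hne _ hx')]
    by_cases hk : k = k'
    · subst hk
      refine Finset.expect_eq_zero fun ω _ => ?_
      by_contra hprod
      have h1 := eq_filter_of_toggleTest_ne_zero (left_ne_zero_of_mul hprod)
      have h2 := eq_filter_of_toggleTest_ne_zero (right_ne_zero_of_mul hprod)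
      exact hxx (by rw [h1, h2])
    · have h := expect_toggle (p k) (q k) (hne _ hx).choose
        (fun ω => toggleTest (p k) (q k) S (hne _ hx).choose ω *
          toggleTest (p k') (q k') S' (hne _ hx').choose ω)
      simp only [toggleTest_toggle hj, toggleTest_toggle_of_ne S' (hne _ hx').choose
        (hne _ hx).choose (hpp k' k (Ne.symm hk)) (hpq k' k) (hpq k k').symm
        (hqq k' k (Ne.symm hk)), neg_mul, Finset.expect_neg_distrib] at h
      linarith

theorem exp_neg_three_mul_le {x : ℝ} (h0 : 0 ≤ x) (h1 : x ≤ 2 / 3) :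
    Real.exp (-(3 * x)) ≤ 1 - x := by
  rw [Real.exp_neg]
  have h : 1 + 3 * x ≤ Real.exp (3 * x) := by linarith [Real.add_one_le_exp (3 * x)]
  refine (inv_anti₀ (by linarith) h).trans ?_
  rw [inv_le_iff_one_le_mul₀ (by linarith)]
  nlinarith

theorem div_pow_le_factorial_mul_choose {d : ℕ} (hd : 1 ≤ d) (hn : d ≤ n) :
    ((n : ℝ) / d) ^ d ≤ d.factorial * n.choose d := by
  have h := Nat.pow_le_choose (α := ℝ) d n
  have hd' : (0 : ℝ) < d := by exact_mod_cast hd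
  have h1 : (n : ℝ) / d ≤ ((n + 1 - d : ℕ) : ℝ) := by
    rw [Nat.cast_sub (by omega), div_le_iff₀ hd']
    push_cast
    have a : (1 : ℝ) ≤ d := by exact_mod_cast hd
    have b : (d : ℝ) ≤ n := by exact_mod_cast hn
    nlinarith
  rw [div_le_iff₀ (by positivity)] at h
  calc _ ≤ ((n + 1 - d : ℕ) : ℝ) ^ d := by gcongr
    _ ≤ _ := by
      rw [mul_comm]
      exact_mod_cast h

theorem variance_urnCount_ge {d : ℕ} (hd : 2 ≤ d) (hn : d ≤ n) (hm : 3 ≤ m) {b : ℝ}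
    (hb : (n : ℝ) / m ≤ b) :
    Real.exp (-(6 * b)) / (12 * d ^ d * d.factorial) * (m * ((n : ℝ) / m) ^ d) ≤
      𝔼 ω : Fin n → Fin m, (urnCount d ω : ℝ) ^ 2 -
        (𝔼 ω : Fin n → Fin m, (urnCount d ω : ℝ)) ^ 2 := by
  have : NeZero m := ⟨by omega⟩
  have hm0 : (3 : ℝ) ≤ m := by exact_mod_cast hm
  have hd0 : (0 : ℝ) < d := by
    have : 0 < d := by omega
    exact_mod_cast this
  refine le_trans ?_ (variance_urnCount_ge_count hd)
  have h1 : (m : ℝ) / 3 ≤ ((m / 2 : ℕ) : ℝ) := by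
    rw [div_le_iff₀ (by norm_num)]
    have : m ≤ m / 2 * 3 := by omega
    exact_mod_cast this
  have h2 : ((n : ℝ) / d) ^ d / d.factorial ≤ n.choose d := by
    rw [div_le_iff₀ (by positivity), mul_comm]
    exact div_pow_le_factorial_mul_choose (by omega) hn
  have h3 : Real.exp (-(6 * b)) / (m : ℝ) ^ d ≤ ((m : ℝ) - 2) ^ (n - d) / (m : ℝ) ^ n := by
    have e1 : ((m : ℝ) - 2) ^ (n - d) / (m : ℝ) ^ n = (1 - 2 / m) ^ (n - d) / (m : ℝ) ^ d := by
      have : 1 - 2 / (m : ℝ) = (m - 2) / m := by field_simp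
      rw [this, div_pow, div_div, ← pow_add, Nat.sub_add_cancel hn]
    rw [e1]
    gcongr
    have hx : (2 : ℝ) / m ≤ 2 / 3 := by gcongr
    calc Real.exp (-(6 * b)) ≤ Real.exp ((n - d : ℕ) * -(3 * (2 / m))) := by
          apply Real.exp_le_exp.2
          have a : ((n - d : ℕ) : ℝ) ≤ n := by exact_mod_cast Nat.sub_le n d
          have : ((n - d : ℕ) : ℝ) / m ≤ b := le_trans (by gcongr) hb
          have e : ((n - d : ℕ) : ℝ) * -(3 * (2 / m)) = -(6 * (((n - d : ℕ) : ℝ) / m)) := by ring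
          rw [e]
          linarith
      _ = Real.exp (-(3 * (2 / m))) ^ (n - d) := Real.exp_nat_mul _ _
      _ ≤ _ := by
          gcongr
          exact exp_neg_three_mul_le (by positivity) hx
  calc _ = (m : ℝ) / 3 * (((n : ℝ) / d) ^ d / d.factorial) *
        (Real.exp (-(6 * b)) / (m : ℝ) ^ d) / 4 := by
        rw [div_pow, div_pow]
        field_simp
        ring
    _ ≤ _ := by gcongr

end LowerBound

/-! ### The occupancy law -/

section OccupancyLaw

variable {n m : ℕ}

theorem integral_occ [NeZero m] (f : (Fin n → Fin m) → ℝ) : ∫ ω, f ω ∂(occ n m) = 𝔼 ω, f ω := by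
  rw [occ, integral_smul_measure, integral_count, Fintype.expect_eq_sum_div_card, smul_eq_mul,
    ENNReal.toReal_inv, ENNReal.toReal_natCast]
  ring

theorem occMean_eq_expect [NeZero m] (d : ℕ) :
    occMean d n m = 𝔼 ω : Fin n → Fin m, (urnCount d ω : ℝ) :=
  integral_occ _

theorem occVar_eq_expect [NeZero m] (d : ℕ) :
    occVar d n m = 𝔼 ω : Fin n → Fin m, ((urnCount d ω : ℝ) - occMean d n m) ^ 2 := by
  rw [occVar, variance_eq_integral (measurable_of_finite _).aemeasurable, integral_occ]
  rfl

theorem occVar_eq_expect_sq_sub [NeZero m] (d : ℕ) :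
    occVar d n m = 𝔼 ω : Fin n → Fin m, (urnCount d ω : ℝ) ^ 2 -
      (𝔼 ω : Fin n → Fin m, (urnCount d ω : ℝ)) ^ 2 := by
  rw [occVar_eq_expect, occMean_eq_expect]
  simp only [sub_sq, Finset.expect_add_distrib, Finset.expect_sub_distrib, ← Finset.expect_mul,
    ← Finset.mul_expect, Finset.expect_const Finset.univ_nonempty]
  ring

theorem occ_toReal_eq_expect [NeZero m] (P : (Fin n → Fin m) → Prop) [DecidablePred P] :
    ((occ n m) {ω | P ω}).toReal = 𝔼 ω, if P ω then 1 else 0 := by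
  have h := integral_indicator_one (μ := occ n m) (s := {ω | P ω}) (Set.toFinite _).measurableSet
  rw [integral_occ] at h
  rw [← Measure.real, ← h]
  refine Finset.expect_congr rfl fun ω _ => ?_
  simp [Set.indicator_apply]

theorem abs_occKolm_le_one [NeZero m] (d : ℕ) (z : ℝ) : |occKolm d n m z| ≤ 1 := by
  classical
  have h0 := stdGaussCDF_nonneg z
  have h1 := stdGaussCDF_le_one z
  rw [occKolm, occ_toReal_eq_expect]
  set E := 𝔼 ω : Fin n → Fin m,
    if ((urnCount d ω : ℝ) - occMean d n m) / √(occVar d n m) ≤ z then (1 : ℝ) else 0 with hE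
  have h2 : 0 ≤ E := Finset.expect_nonneg fun ω _ => by split_ifs <;> norm_num
  have h3 : E ≤ 1 := by
    rw [hE]
    refine (Finset.expect_le_expect (g := fun _ => (1 : ℝ)) fun ω _ => ?_).trans_eq ?_
    · split_ifs <;> norm_num
    · exact Finset.expect_const Finset.univ_nonempty _
  rw [abs_le]
  constructor <;> linarith

theorem occVar_pos_of_ne [NeZero m] {d : ℕ} {ω ω' : Fin n → Fin m}
    (h : urnCount d ω ≠ urnCount d ω') : 0 < occVar d n m := by
  have hne : ∃ ζ : Fin n → Fin m, (urnCount d ζ : ℝ) - occMean d n m ≠ 0 := by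
    by_contra! hall
    have h1 := hall ω
    have h2 := hall ω'
    exact h (by exact_mod_cast (by linarith : (urnCount d ω : ℝ) = urnCount d ω'))
  obtain ⟨ζ, hζ⟩ := hne
  rw [occVar_eq_expect]
  exact Finset.expect_pos' (fun _ _ => sq_nonneg _) ⟨ζ, Finset.mem_univ _, by positivity⟩

theorem occVar_two_pos {d : ℕ} (hd : 2 ≤ d) (hn : d ≤ n) : 0 < occVar d n 2 := by
  rcases hn.eq_or_lt with rfl | hlt
  · rw [occVar_eq_expect_sq_sub]
    refine lt_of_lt_of_le ?_ (variance_urnCount_ge_count hd)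
    simp
  · obtain ⟨S, -, hS⟩ := Finset.exists_subset_card_eq
      (show d ≤ (Finset.univ : Finset (Fin n)).card by simpa using hn)
    refine occVar_pos_of_ne (ω := fun _ => 0) (ω' := fun l => if l ∈ S then 0 else 1) ?_
    have h0 : urnCount d (fun _ : Fin n => (0 : Fin 2)) = 0 := by
      unfold urnCount
      rw [Finset.card_eq_zero, Finset.filter_eq_empty_iff]
      intro u _
      unfold ballCount
      by_cases hu : (0 : Fin 2) = u
      · simp only [hu, Finset.filter_true, Finset.card_univ, Fintype.card_fin]
        omega
      · simp only [hu, Finset.filter_false, Finset.card_empty]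
        omega
    have h1 : 0 < urnCount d (fun l : Fin n => if l ∈ S then (0 : Fin 2) else 1) := by
      unfold urnCount
      rw [Finset.card_pos]
      refine ⟨0, ?_⟩
      simp [ballCount, hS]
    omega

theorem occVar_le_sq [NeZero m] (d : ℕ) : occVar d n m ≤ (m : ℝ) ^ 2 := by
  rw [occVar_eq_expect_sq_sub]
  have h : 𝔼 ω : Fin n → Fin m, (urnCount d ω : ℝ) ^ 2 ≤ (m : ℝ) ^ 2 := by
    refine (Finset.expect_le_expect (g := fun _ => (m : ℝ) ^ 2) fun ω _ => ?_).trans_eq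
      (Finset.expect_const Finset.univ_nonempty _)
    have : urnCount d ω ≤ m := by
      simpa [urnCount] using Finset.card_filter_le (Finset.univ : Finset (Fin m))
        fun i => ballCount ω i = d
    gcongr
  nlinarith [sq_nonneg (𝔼 ω : Fin n → Fin m, (urnCount d ω : ℝ))]

theorem expect_abs_sub_pairSum_le [NeZero m] {d : ℕ} (hd : 2 ≤ d) {ψ : ℝ → ℝ → ℝ}
    (hψ : ∀ x y, |ψ x y| ≤ |x| * |y|) {b c κ V e : ℝ} (hb : (n : ℝ) / m ≤ b) (hc : 0 < c)
    (hκ : |κ| ≤ 1) (hV : 0 < V) (hlow : c * (m * ((n : ℝ) / m) ^ d) ≤ V)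
    (he : 𝔼 ω : Fin n → Fin m × Fin m, κ * pairSum d ψ ω / V = e) :
    𝔼 ω : Fin n → Fin m × Fin m, |e - κ * pairSum d ψ ω / V| ≤
      √(64 * (d + 1 + 8 * b) * (2 + 8 * b) / c) / √V := by
  rw [← Real.sqrt_div' _ hV.le]
  refine expect_abs_sub_le_sqrt _ e _ he ?_
  have hvar := variance_pairSum_le (n := n) (m := m) d hd hψ
  have hb0 : 0 ≤ b := le_trans (by positivity) hb
  set A := 𝔼 ω : Fin n → Fin m × Fin m, pairSum d ψ ω ^ 2 -
    (𝔼 ω : Fin n → Fin m × Fin m, pairSum d ψ ω) ^ 2 with hA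
  have hmp : (m : ℝ) * ((n : ℝ) / m) ^ d ≤ V / c := by
    rw [le_div_iff₀ hc, mul_comm]
    exact hlow
  have hAle : A ≤ 64 * (d + 1 + 8 * b) * (2 + 8 * b) * (V / c) := by
    refine hvar.trans ?_
    gcongr
  have heq : 𝔼 ω : Fin n → Fin m × Fin m, (κ * pairSum d ψ ω / V) ^ 2 -
      (𝔼 ω : Fin n → Fin m × Fin m, κ * pairSum d ψ ω / V) ^ 2 = κ ^ 2 * (A / V ^ 2) := by
    have e1 : ∀ ω : Fin n → Fin m × Fin m,
        (κ * pairSum d ψ ω / V) ^ 2 = (κ ^ 2 / V ^ 2) * pairSum d ψ ω ^ 2 := fun ω => by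
      field_simp
    have e2 : ∀ ω : Fin n → Fin m × Fin m,
        κ * pairSum d ψ ω / V = (κ / V) * pairSum d ψ ω := fun ω => by ring
    simp only [e1]
    simp only [e2, ← Finset.mul_expect, hA]
    ring
  rw [heq]
  have hκ2 : κ ^ 2 ≤ 1 := (sq_le_one_iff_abs_le_one κ).2 hκ
  have hR : 0 ≤ 64 * (d + 1 + 8 * b) * (2 + 8 * b) * (V / c) := by
    positivity
  calc κ ^ 2 * (A / V ^ 2) ≤ κ ^ 2 * (64 * (d + 1 + 8 * b) * (2 + 8 * b) * (V / c) / V ^ 2) := by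
        gcongr
    _ ≤ 1 * (64 * (d + 1 + 8 * b) * (2 + 8 * b) * (V / c) / V ^ 2) := by gcongr
    _ = _ := by
        field_simp

theorem abs_occKolm_le_of_lower [NeZero m] {d : ℕ} (hd : 2 ≤ d) {b c : ℝ}
    (hb : (n : ℝ) / m ≤ b) (hc : 0 < c) (hpos : 0 < occVar d n m)
    (hlow : c * (m * ((n : ℝ) / m) ^ d) ≤ occVar d n m) (z : ℝ) :
    |occKolm d n m z| ≤
      4 * √(64 * (d + 1 + 8 * b) * (2 + 8 * b) / c) / √(occVar d n m) := by
  classical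
  set V := occVar d n m with hV
  set F : (Fin n → Fin m) → ℝ := fun ω => ((urnCount d ω : ℝ) - occMean d n m) / √V with hF
  have hs : √V * √V = V := Real.mul_self_sqrt hpos.le
  have hs0 : 0 < √V := Real.sqrt_pos.2 hpos
  have hF0 : 𝔼 ξ, F ξ = 0 := by
    simp only [hF, ← Finset.expect_div, Finset.expect_sub_distrib, ← occMean_eq_expect,
      Finset.expect_const Finset.univ_nonempty, sub_self, zero_div]
  have hF1 : 𝔼 ξ, F ξ * F ξ = 1 := by
    have : ∀ ξ, F ξ * F ξ = ((urnCount d ξ : ℝ) - occMean d n m) ^ 2 / V := by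
      intro ξ
      rw [hF, div_mul_div_comm, hs, sq]
    simp only [this]
    rw [← Finset.expect_div, ← occVar_eq_expect, ← hV, div_self hpos.ne']
  have hD : ∀ j ω, hybridDiff F j ω =
      hybridDiff (fun X : Fin n → Fin m => (urnCount d X : ℝ)) j ω / √V := by
    intro j ω
    simp only [hybridDiff, hF]
    ring
  have hΔ : ∀ j ω, resampleDiff F j ω =
      resampleDiff (fun X : Fin n → Fin m => (urnCount d X : ℝ)) j ω / √V := by
    intro j ω
    simp only [resampleDiff, hF]
    ring
  have hG : ∀ ω, (∑ j, hybridDiff F j ω * resampleDiff F j ω) / 2 =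
      1 / 2 * pairSum d (fun x y => x * y) ω / V := by
    intro ω
    simp only [pairSum, hD, hΔ, div_mul_div_comm, hs, ← Finset.sum_div]
    ring
  have hH : ∀ ω, ∑ j, |hybridDiff F j ω| * resampleDiff F j ω =
      1 * pairSum d (fun x y => |x| * y) ω / V := by
    intro ω
    simp only [pairSum, hD, hΔ, abs_div, abs_of_pos hs0, div_mul_div_comm, hs, ← Finset.sum_div]
    ring
  have hGmean : 𝔼 ω : Fin n → Fin m × Fin m, 1 / 2 * pairSum d (fun x y => x * y) ω / V = 1 := by
    simp only [← hG]
    have h := covariance_identity F F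
    rw [hF0, hF1] at h
    rw [← Finset.expect_div, Finset.expect_sum_comm, Finset.sum_div, ← h]
    ring
  have hHmean : 𝔼 ω : Fin n → Fin m × Fin m, 1 * pairSum d (fun x y => |x| * y) ω / V = 0 := by
    simp only [← hH]
    rw [Finset.expect_sum_comm]
    refine Finset.sum_eq_zero fun j _ => ?_
    have h := expect_swapAt j fun ω => |hybridDiff F j ω| * resampleDiff F j ω
    simp only [hybridDiff_swapAt, resampleDiff_swapAt, abs_neg, mul_neg,
      Finset.expect_neg_distrib] at h
    linarith
  have hK := abs_kolmogorov_le F hF0 z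
  simp only [hG, hH] at hK
  have h1 := expect_abs_sub_pairSum_le hd (ψ := fun x y => x * y) (fun x y => (abs_mul x y).le)
    (κ := 1 / 2) hb hc (by rw [abs_of_pos] <;> norm_num) hpos hlow hGmean
  have h2 := expect_abs_sub_pairSum_le hd (ψ := fun x y => |x| * y)
    (fun x y => by rw [abs_mul, abs_abs]) (κ := 1) hb hc (by simp) hpos hlow hHmean
  simp only [zero_sub, abs_neg] at h2
  rw [occKolm, occ_toReal_eq_expect, mul_div_assoc]
  calc _ ≤ _ := hK
    _ ≤ _ := by linarith

end OccupancyLaw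

/-- Corollary 1.1: in the regime `n/m ≤ b` the Berry–Esseen bound has the optimal
rate `1/σ_{n,m}`. -/
theorem occupancy_berry_esseen_bounded_ratio (d : ℕ) (hd : 2 ≤ d) (b : ℝ) (hb : 0 < b) :
    ∃ C : ℝ, 0 < C ∧ ∀ n m : ℕ, d ≤ n → 2 ≤ m → (n : ℝ) / m ≤ b → ∀ z : ℝ,
      |occKolm d n m z| ≤ C / Real.sqrt (occVar d n m) := by
  set c : ℝ := Real.exp (-(6 * b)) / (12 * d ^ d * d.factorial) with hc
  set K : ℝ := √(64 * (d + 1 + 8 * b) * (2 + 8 * b) / c) with hK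
  have hd0 : (0 : ℝ) < d := by
    have : 0 < d := by omega
    exact_mod_cast this
  have hc0 : 0 < c := by positivity
  refine ⟨4 * K + 2, by positivity, fun n m hn hm hnm z => ?_⟩
  have : NeZero m := ⟨by omega⟩
  rcases hm.eq_or_lt with rfl | hm3
  · have hpos := occVar_two_pos hd hn
    have hle : √(occVar d n 2) ≤ 2 := by
      rw [Real.sqrt_le_left (by norm_num)]
      simpa using occVar_le_sq (n := n) (m := 2) d
    refine (abs_occKolm_le_one d z).trans ?_
    rw [le_div_iff₀ (Real.sqrt_pos.2 hpos), one_mul]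
    have : 0 ≤ K := Real.sqrt_nonneg _
    linarith
  · have hlow := variance_urnCount_ge hd hn hm3 hnm
    rw [← occVar_eq_expect_sq_sub, ← hc] at hlow
    have hn0 : (0 : ℝ) < n := by
      have : 0 < n := by omega
      exact_mod_cast this
    have hm0 : (0 : ℝ) < m := by
      have : 0 < m := by omega
      exact_mod_cast this
    have hpos : 0 < occVar d n m := lt_of_lt_of_le (by positivity) hlow
    refine (abs_occKolm_le_of_lower hd hnm hc0 hpos hlow z).trans ?_
    gcongr
    linarith
end

section
/- Let Y = Σ_{α ∈ I} X_α be a finite sum of exchangeable Bernoulli random variables {X_α, α ∈ I} with P(X_α = 1) > 0. Then for every α ∈ I and every bounded function f, E[Y f(Y)] = E[Y] · E[f(Y) | X_α = 1]. Consequently, if Y^α is any random variable whose distribution is the conditional distribution of Y given X_α = 1, then Y^α has the Y-size bias distribution; moreover, if I is a random index uniformly distributed over the index set and independent of all other variables, the mixture Y^I also has the Y-size bias distribution. -/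
open MeasureTheory ProbabilityTheory

section

variable {Ω ι : Type*} [MeasurableSpace Ω] {P : Measure Ω} [Fintype ι] {X : ι → Ω → ℝ}

/-- For an exchangeable family, `E[X_α g(Σ X)]` does not depend on the index `α`. -/
theorem integral_mul_comp_sum_eq_of_exchangeable
    (hmeas : ∀ α, Measurable (X α))
    (hexch : ∀ σ : Equiv.Perm ι,
      Measure.map (fun ω => fun α => X (σ α) ω) P
        = Measure.map (fun ω => fun α => X α ω) P)
    {g : ℝ → ℝ} (hg : Measurable g) (α β : ι) :
    ∫ ω, X β ω * g (∑ γ, X γ ω) ∂P = ∫ ω, X α ω * g (∑ γ, X γ ω) ∂P := by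
  classical
  have hF : Measurable fun x : ι → ℝ => x α * g (∑ γ, x γ) := by fun_prop
  have h := congrArg (fun μ => ∫ x, x α * g (∑ γ, x γ) ∂μ) (hexch (Equiv.swap α β))
  rw [integral_map (by fun_prop) hF.aestronglyMeasurable,
    integral_map (by fun_prop) hF.aestronglyMeasurable] at h
  have hsum (ω : Ω) : ∑ γ, X (Equiv.swap α β γ) ω = ∑ γ, X γ ω :=
    Equiv.sum_comp (Equiv.swap α β) fun γ => X γ ω
  simpa [hsum] using h

/-- For a finite exchangeable Bernoulli family, `E[Y g(Y)] = |ι| · E[X_α g(Y)]`, where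
`Y = Σ X`. -/
theorem integral_sum_mul_comp_sum_of_exchangeable [IsFiniteMeasure P]
    (hmeas : ∀ α, Measurable (X α))
    (hBer : ∀ α ω, X α ω = 0 ∨ X α ω = 1)
    (hexch : ∀ σ : Equiv.Perm ι,
      Measure.map (fun ω => fun α => X (σ α) ω) P
        = Measure.map (fun ω => fun α => X α ω) P)
    {g : ℝ → ℝ} (hg : Measurable g) (hbdd : ∃ M, ∀ x, |g x| ≤ M) (α : ι) :
    ∫ ω, (∑ γ, X γ ω) * g (∑ γ, X γ ω) ∂P
      = Fintype.card ι * ∫ ω, X α ω * g (∑ γ, X γ ω) ∂P := by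
  obtain ⟨M, hM⟩ := hbdd
  have hint : ∀ β, Integrable (fun ω => X β ω * g (∑ γ, X γ ω)) P := fun β => by
    refine Integrable.of_bound (by fun_prop) M (.of_forall fun ω => ?_)
    have hM0 : 0 ≤ M := (abs_nonneg _).trans (hM 0)
    rcases hBer β ω with h | h <;> simp [h, hM0, hM]
  simp_rw [Finset.sum_mul]
  rw [integral_finsetSum _ fun β _ => hint β, Finset.sum_congr rfl fun β _ =>
    integral_mul_comp_sum_eq_of_exchangeable hmeas hexch hg α β]
  simp

end

/-- Integrating against a Bernoulli variable is integrating over the event that it is `1`. -/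
theorem integral_bernoulli_mul {Ω : Type*} [MeasurableSpace Ω] {P : Measure Ω} {B : Ω → ℝ}
    (hB : Measurable B) (hBer : ∀ ω, B ω = 0 ∨ B ω = 1) (h : Ω → ℝ) :
    ∫ ω, B ω * h ω ∂P = ∫ ω in {ω | B ω = 1}, h ω ∂P := by
  have hs : MeasurableSet {ω | B ω = 1} := hB (measurableSet_singleton 1)
  rw [← integral_indicator hs]
  congr 1 with ω
  rcases hBer ω with hω | hω <;> simp [Set.indicator, hω]

/-- Integrals of measurable functions of `U` and `V` agree when `U` has the law of the
measurable variable `V`, with no measurability assumption on `U`. -/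
theorem integral_comp_eq_of_map_eq {Ω Ω' : Type*} [MeasurableSpace Ω] [MeasurableSpace Ω']
    {P : Measure Ω} {P' : Measure Ω'} [NeZero P] {U : Ω' → ℝ} {V : Ω → ℝ} (hV : Measurable V)
    (hUV : Measure.map U P' = Measure.map V P) {f : ℝ → ℝ} (hf : Measurable f) :
    ∫ ω, f (U ω) ∂P' = ∫ ω, f (V ω) ∂P := by
  have hU : AEMeasurable U P' := by
    by_contra hU
    rw [Measure.map_of_not_aemeasurable hU, eq_comm,
      Measure.map_eq_zero_iff hV.aemeasurable] at hUV
    exact NeZero.ne P hUV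
  rw [← integral_map hU hf.aestronglyMeasurable, hUV,
    integral_map hV.aemeasurable hf.aestronglyMeasurable]

/-- Lemma 2.1: size biasing a finite sum of exchangeable Bernoulli variables.
If `Y = Σ_α X_α` with the `X_α` exchangeable Bernoulli variables of positive mean,
then for every `α` and bounded `f`, `E[Y f(Y)] = E[Y] · E[f(Y) | X_α = 1]`;
consequently any `Y^α` distributed as `Y` conditioned on `X_α = 1` has the `Y`-size
bias distribution, and so does the uniform mixture `Y^I` of the `Y^α`. -/
theorem sizeBias_exchangeable_sum {Ω : Type*} [MeasurableSpace Ω]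
    (P : Measure Ω) [IsProbabilityMeasure P]
    {ι : Type*} [Fintype ι] [Nonempty ι]
    (X : ι → Ω → ℝ) (hmeas : ∀ α, Measurable (X α))
    (hBer : ∀ α ω, X α ω = 0 ∨ X α ω = 1)
    (hexch : ∀ σ : Equiv.Perm ι,
      Measure.map (fun ω => fun α => X (σ α) ω) P
        = Measure.map (fun ω => fun α => X α ω) P)
    (hpos : ∀ α, 0 < P {ω | X α ω = 1})
    (Y : Ω → ℝ) (hY : Y = fun ω => ∑ α, X α ω) :
    -- `E[Y f(Y)] = E[Y] · E[f(Y) | X_α = 1]` for every index `α` and bounded `f`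
    (∀ α : ι, ∀ f : ℝ → ℝ, Measurable f → (∃ M, ∀ x, |f x| ≤ M) →
      ∫ ω, Y ω * f (Y ω) ∂P
        = (∫ ω, Y ω ∂P) * ∫ ω, f (Y ω) ∂(P[|{ω | X α ω = 1}])) ∧
    -- any `Y^α` with the conditional distribution of `Y` given `X_α = 1` has the
    -- `Y`-size bias distribution
    (∀ (Ω' : Type) (mΩ' : MeasurableSpace Ω') (P' : Measure Ω'),
      IsProbabilityMeasure P' →
      ∀ (Ys : Ω' → ℝ) (α : ι),
        Measure.map Ys P' = Measure.map Y (P[|{ω | X α ω = 1}]) →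
        ∀ f : ℝ → ℝ, Measurable f → (∃ M, ∀ x, |f x| ≤ M) →
          ∫ ω, Y ω * f (Y ω) ∂P = (∫ ω, Y ω ∂P) * ∫ ω', f (Ys ω') ∂P') ∧
    -- the mixture `Y^I`, with `I` uniform on `ι` and independent of all else, also
    -- has the `Y`-size bias distribution
    (∀ (Ω' : Type) (mΩ' : MeasurableSpace Ω') (P' : Measure Ω'),
      IsProbabilityMeasure P' →
      ∀ (Ys : ι → Ω' → ℝ),
        (∀ α, Measure.map (Ys α) P' = Measure.map Y (P[|{ω | X α ω = 1}])) →
        ∀ f : ℝ → ℝ, Measurable f → (∃ M, ∀ x, |f x| ≤ M) →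
          ∫ ω, Y ω * f (Y ω) ∂P
            = (∫ ω, Y ω ∂P)
              * ((Fintype.card ι : ℝ)⁻¹ * ∑ α : ι, ∫ ω', f (Ys α ω') ∂P')) := by
  have hYm : Measurable Y := by rw [hY]; fun_prop
  have hcond : ∀ α : ι, ∀ f : ℝ → ℝ, Measurable f → (∃ M, ∀ x, |f x| ≤ M) →
      ∫ ω, Y ω * f (Y ω) ∂P
        = (∫ ω, Y ω ∂P) * ∫ ω, f (Y ω) ∂(P[|{ω | X α ω = 1}]) := by
    intro α f hf hbdd
    have hmean : ∫ ω, Y ω ∂P = Fintype.card ι * P.real {ω | X α ω = 1} := by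
      have h := integral_sum_mul_comp_sum_of_exchangeable hmeas hBer hexch
        (measurable_const (a := (1 : ℝ))) ⟨1, by simp⟩ α
      rw [integral_bernoulli_mul (hmeas α) (hBer α)] at h
      simpa [hY] using h
    have hne : P.real {ω | X α ω = 1} ≠ 0 :=
      (ENNReal.toReal_pos (hpos α).ne' (measure_ne_top _ _)).ne'
    have hsum := integral_sum_mul_comp_sum_of_exchangeable hmeas hBer hexch hf hbdd α
    rw [integral_bernoulli_mul (hmeas α) (hBer α)] at hsum
    rw [hmean, ProbabilityTheory.cond, integral_smul_measure, ENNReal.toReal_inv,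
      ← measureReal_def, smul_eq_mul, mul_assoc, mul_inv_cancel_left₀ hne, hY]
    exact hsum
  have hlaw : ∀ (Ω' : Type) (mΩ' : MeasurableSpace Ω') (P' : Measure Ω'),
      ∀ (Ys : Ω' → ℝ) (α : ι),
        Measure.map Ys P' = Measure.map Y (P[|{ω | X α ω = 1}]) →
        ∀ f : ℝ → ℝ, Measurable f → (∃ M, ∀ x, |f x| ≤ M) →
          ∫ ω, Y ω * f (Y ω) ∂P = (∫ ω, Y ω ∂P) * ∫ ω', f (Ys ω') ∂P' := by
    intro Ω' _ P' Ys α hYs f hf hbdd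
    have := cond_isProbabilityMeasure (hpos α).ne'
    rw [integral_comp_eq_of_map_eq hYm hYs hf]
    exact hcond α f hf hbdd
  refine ⟨hcond, fun Ω' mΩ' P' _ => hlaw Ω' mΩ' P', ?_⟩
  intro Ω' mΩ' P' _ Ys hYs f hf hbdd
  rw [mul_left_comm, Finset.mul_sum, Finset.sum_congr rfl fun α _ =>
    (hlaw Ω' mΩ' P' (Ys α) α (hYs α) f hf hbdd).symm]
  simp
end

section
/- Let d ≥ 2 be an integer, and define τ_d(x) = e^{−x} x^d / d! and φ_d(x) = 1 − τ_d(x) − τ_d(x)(x−d)²/x for x > 0. Then the infimum of φ_d(x) over all x > 0 is strictly positive. -/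
/-- The Poisson(x) probability of the value `d`: `τ_d(x) = e^{−x} x^d / d!`. -/
noncomputable def tauP (d : ℕ) (x : ℝ) : ℝ := Real.exp (-x) * x ^ d / d.factorial

/-- `φ_d(x) = 1 − τ_d(x) − τ_d(x)(x−d)²/x`. -/
noncomputable def phiP (d : ℕ) (x : ℝ) : ℝ :=
  1 - tauP d x - tauP d x * (x - (d : ℝ)) ^ 2 / x

open Filter Topology

/-- If `(f (k + 1))` sums to `s` with weights `x ^ k / k!`, then `(k * f k)` sums to `x * s`
with the same weights. -/
lemma hasSum_natCast_mul_pow_div_factorial {f : ℕ → ℝ} {x s : ℝ}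
    (h : HasSum (fun k : ℕ => x ^ k / k.factorial * f (k + 1)) s) :
    HasSum (fun k : ℕ => x ^ k / k.factorial * (k * f k)) (x * s) := by
  rw [← hasSum_nat_add_iff' 1]
  simp only [Finset.sum_range_one, Nat.cast_zero, zero_mul, mul_zero, sub_zero]
  refine HasSum.congr_fun (h.mul_left x) fun k => ?_
  rw [Nat.factorial_succ]
  push_cast
  field_simp
  ring

lemma hasSum_pow_div_factorial (x : ℝ) :
    HasSum (fun k : ℕ => x ^ k / k.factorial) (Real.exp x) := by
  rw [Real.exp_eq_exp_ℝ]
  exact NormedSpace.expSeries_div_hasSum_exp x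

/-- Unnormalised second moment of `1 + b * (N - x)` for `N` Poisson with mean `x`. -/
lemma hasSum_pow_div_factorial_mul_sq (x b : ℝ) :
    HasSum (fun k : ℕ => x ^ k / k.factorial * (1 + b * (k - x)) ^ 2)
      (Real.exp x * (1 + b ^ 2 * x)) := by
  have h0 : HasSum (fun k : ℕ => x ^ k / k.factorial * 1) (Real.exp x) := by
    simpa using hasSum_pow_div_factorial x
  have h1 : HasSum (fun k : ℕ => x ^ k / k.factorial * (k * 1)) (x * Real.exp x) :=
    hasSum_natCast_mul_pow_div_factorial (f := fun _ => 1) h0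
  have h2 := hasSum_natCast_mul_pow_div_factorial (f := fun k => (k : ℝ))
    (s := x * Real.exp x + Real.exp x) (x := x) (by
      refine HasSum.congr_fun (h1.add h0) fun k => ?_
      push_cast
      ring)
  have hE : Real.exp x * (1 + b ^ 2 * x) = b ^ 2 * (x * (x * Real.exp x + Real.exp x)) +
      2 * b * (1 - b * x) * (x * Real.exp x) + (1 - b * x) ^ 2 * Real.exp x := by ring
  rw [hE]
  refine HasSum.congr_fun (((h2.mul_left (b ^ 2)).add
    (h1.mul_left (2 * b * (1 - b * x)))).add (h0.mul_left ((1 - b * x) ^ 2))) fun k => ?_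
  ring

/-- The function `1 - φ_d`, with the singularity at `0` removed. -/
noncomputable def phiPDefect (d : ℕ) (x : ℝ) : ℝ :=
  Real.exp (-x) * x ^ (d - 1) * (x + (x - d) ^ 2) / d.factorial

lemma phiP_eq_one_sub_phiPDefect {d : ℕ} (hd : 1 ≤ d) {x : ℝ} (hx : x ≠ 0) :
    phiP d x = 1 - phiPDefect d x := by
  obtain ⟨n, rfl⟩ := Nat.exists_eq_add_of_le' hd
  simp only [phiP, tauP, phiPDefect, Nat.add_sub_cancel]
  field_simp
  ring

lemma phiPDefect_lt_one {d : ℕ} (hd : 2 ≤ d) {x : ℝ} (hx : 0 < x) :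
    phiPDefect d x < 1 := by
  set b : ℝ := (d - x) / x with hb
  have hsum := hasSum_pow_div_factorial_mul_sq x b
  have hle := sum_le_hasSum {0, 1, d} (fun k _ => by positivity) hsum
  rw [Finset.sum_insert (by simp; omega), Finset.sum_insert (by simp; omega),
    Finset.sum_singleton] at hle
  have hpos : 0 < x ^ 0 / (Nat.factorial 0 : ℝ) * (1 + b * ((0 : ℕ) - x)) ^ 2 +
      x ^ 1 / (Nat.factorial 1 : ℝ) * (1 + b * ((1 : ℕ) - x)) ^ 2 := by
    by_cases h : x = d - 1
    · have h1 : 1 + b * (((1 : ℕ) : ℝ) - x) = 1 / x := by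
        rw [hb]
        field_simp
        push_cast
        rw [h]
        ring
      rw [h1]
      positivity
    · have h0 : 1 + b * (((0 : ℕ) : ℝ) - x) ≠ 0 := by
        have : 1 + b * (((0 : ℕ) : ℝ) - x) = x - (d - 1) := by
          rw [hb]
          field_simp
          push_cast
          ring
        rw [this]
        exact sub_ne_zero.mpr h
      positivity
  have hA : 1 + b * (d - x) = 1 + b ^ 2 * x := by
    rw [hb]
    field_simp
  have hApos : 0 < 1 + b ^ 2 * x := by positivity
  have hlt : x ^ d / d.factorial * (1 + b ^ 2 * x) < Real.exp x := by
    rw [hA] at hle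
    refine lt_of_mul_lt_mul_right ?_ hApos.le
    nlinarith
  have hg : phiPDefect d x = x ^ d / d.factorial * (1 + b ^ 2 * x) / Real.exp x := by
    obtain ⟨n, rfl⟩ := Nat.exists_eq_add_of_le' (show 1 ≤ d by omega)
    rw [phiPDefect, Real.exp_neg, hb, Nat.add_sub_cancel]
    field_simp
    ring
  rw [hg, div_lt_one (Real.exp_pos x)]
  exact hlt

lemma continuous_phiPDefect (d : ℕ) : Continuous (phiPDefect d) := by
  unfold phiPDefect
  fun_prop

lemma tendsto_phiPDefect_atTop (d : ℕ) : Tendsto (phiPDefect d) atTop (𝓝 0) := by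
  have h := fun n : ℕ => Real.tendsto_pow_mul_exp_neg_atTop_nhds_zero n
  have := ((((h (d - 1 + 2)).add ((h (d - 1 + 1)).const_mul (1 - 2 * (d : ℝ)))).add
    ((h (d - 1)).const_mul ((d : ℝ) ^ 2))).div_const (d.factorial : ℝ))
  simp only [mul_zero, add_zero, zero_div] at this
  refine this.congr fun x => ?_
  rw [phiPDefect]
  ring

/-- Lemma 3.2, Part 3: for `d ≥ 2`, the infimum of `φ_d` over `x > 0` is strictly
positive. -/
theorem phiP_inf_pos (d : ℕ) (hd : 2 ≤ d) :
    ∃ c : ℝ, 0 < c ∧ ∀ x : ℝ, 0 < x → c ≤ phiP d x := by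
  obtain ⟨M, hM⟩ := eventually_atTop.mp
    ((tendsto_phiPDefect_atTop d).eventually (gt_mem_nhds (show (0 : ℝ) < 1 / 2 by norm_num)))
  obtain ⟨y, hy, hmax⟩ := (isCompact_Icc (a := (0 : ℝ)) (b := max M 0)).exists_isMaxOn
    (Set.nonempty_Icc.mpr (le_max_right _ _)) (continuous_phiPDefect d).continuousOn
  have hy1 : phiPDefect d y < 1 := by
    rcases hy.1.eq_or_lt with rfl | hpos
    · simp [phiPDefect, show d - 1 ≠ 0 by omega]
    · exact phiPDefect_lt_one hd hpos
  refine ⟨min (1 / 2) (1 - phiPDefect d y), lt_min (by norm_num) (by linarith), fun x hx => ?_⟩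
  rw [phiP_eq_one_sub_phiPDefect (by omega) hx.ne']
  rcases le_total x (max M 0) with h | h
  · have : phiPDefect d x ≤ phiPDefect d y := hmax ⟨hx.le, h⟩
    exact (min_le_right _ _).trans (by linarith)
  · have := hM x ((le_max_left _ _).trans h)
    exact (min_le_left _ _).trans (by linarith)
end

section
/- Let d ≥ 2 be an integer. Given any n*, m* and ε > 0, there exist constants r₁ and C such that every pair of integers n ≥ d, m ≥ 2 satisfying σ²_{n,m} ≥ r₁ also satisfies: (a) n > n* and m > m*; (b) n/m ≤ (1+ε) log m; and (c) μ_{n,m} ≤ C·σ²_{n,m}. -/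
open MeasureTheory ProbabilityTheory

namespace Occupancy

section Exchange

variable {n m : ℕ}

/-- Move ball `β` to the other urn of the pair `a`, `b` if it lies in one of them. -/
def flip (a b : Fin m) (β : Fin n) (ω : Fin n → Fin m) : Fin n → Fin m :=
  Function.update ω β (Equiv.swap a b (ω β))

lemma flip_involutive (a b : Fin m) (β : Fin n) : Function.Involutive (flip a b β) := by
  intro ω
  simp [flip]

lemma ballCount_update (ω : Fin n → Fin m) (β : Fin n) (c e : Fin m) :
    ballCount (Function.update ω β c) e + (if ω β = e then 1 else 0)
      = ballCount ω e + (if c = e then 1 else 0) := by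
  unfold ballCount
  rw [Finset.card_filter, Finset.card_filter, Fintype.sum_eq_add_sum_compl β,
    Fintype.sum_eq_add_sum_compl β (fun b => if ω b = e then 1 else 0)]
  have h : ∑ i ∈ ({β} : Finset (Fin n))ᶜ, (if Function.update ω β c i = e then 1 else 0)
      = ∑ i ∈ ({β} : Finset (Fin n))ᶜ, (if ω i = e then 1 else 0) := by
    refine Finset.sum_congr rfl fun i hi => ?_
    rw [Function.update_of_ne (by simpa using hi)]
  rw [h, Function.update_self]
  omega

lemma ballCount_flip_of_ne {a b e : Fin m} (ha : e ≠ a) (hb : e ≠ b) (β : Fin n)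
    (ω : Fin n → Fin m) : ballCount (flip a b β ω) e = ballCount ω e := by
  have h := ballCount_update ω β (Equiv.swap a b (ω β)) e
  have h' : Equiv.swap a b (ω β) = e ↔ ω β = e := by
    rw [Equiv.swap_apply_eq_iff, Equiv.swap_apply_of_ne_of_ne ha hb]
  simp only [h'] at h
  exact Nat.add_right_cancel h

/-- Detailed balance for moving a ball between the urns `a` and `b`. -/
lemma sum_exchange {a b : Fin m} (hab : a ≠ b) (F : (Fin n → Fin m) → ℝ)
    (hF : ∀ β ω, F (flip a b β ω) = F ω) (u : ℕ → ℕ → ℝ) :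
    ∑ ω, F ω * (ballCount ω a * u (ballCount ω a - 1) (ballCount ω b))
      = ∑ ω, F ω * (ballCount ω b * u (ballCount ω a) (ballCount ω b - 1)) := by
  have key : ∀ (e : Fin m) (v : (Fin n → Fin m) → ℝ), ∑ ω, F ω * (ballCount ω e * v ω)
      = ∑ β, ∑ ω : Fin n → Fin m, if ω β = e then F ω * v ω else 0 := by
    intro e v
    rw [Finset.sum_comm]
    refine Finset.sum_congr rfl fun ω _ => ?_
    rw [← Finset.sum_filter, Finset.sum_const, nsmul_eq_mul]
    simp only [ballCount]
    ring
  rw [key, key]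
  refine Finset.sum_congr rfl fun β _ => ?_
  rw [← Equiv.sum_comp (flip_involutive a b β).toPerm]
  refine Finset.sum_congr rfl fun ω _ => ?_
  simp only [Function.Involutive.coe_toPerm, hF]
  have h1 : flip a b β ω β = a ↔ ω β = b := by
    simp [flip, Equiv.swap_apply_eq_iff]
  simp only [h1]
  split_ifs with hb
  · have ea := ballCount_update ω β (Equiv.swap a b (ω β)) a
    have eb := ballCount_update ω β (Equiv.swap a b (ω β)) b
    simp only [hb, Equiv.swap_apply_right, hab, hab.symm, if_true, if_false] at ea eb
    have ea' : ballCount (flip a b β ω) a - 1 = ballCount ω a := by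
      simp only [flip, hb, Equiv.swap_apply_right]; omega
    have eb' : ballCount (flip a b β ω) b = ballCount ω b - 1 := by
      simp only [flip, hb, Equiv.swap_apply_right]; omega
    rw [ea', eb']
  · rfl

end Exchange

/-- Rates on the edges `(j, l + 1) — (j + 1, l)` that yield the test function `testFun`. -/
noncomputable def edgeRate (d j l : ℕ) : ℝ :=
  if j = d ∧ l ≠ d then 1 / ((l : ℝ) + 1)
  else if j + 1 = d ∧ (l = 0 ∨ l = d + 1) then -1 / (d : ℝ) else 0

/-- A function of the loads of two urns, with conditional mean zero given the total load. -/
noncomputable def testFun (d j l : ℕ) : ℝ :=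
  l * edgeRate d j (l - 1) - j * edgeRate d (j - 1) l

lemma testFun_self {d : ℕ} (hd : 2 ≤ d) (l : ℕ) : testFun d d l = 1 := by
  have hd0 : (d : ℝ) ≠ 0 := by positivity
  unfold testFun edgeRate
  have h1 : ¬ (d - 1 = d) := by omega
  have h2 : d - 1 + 1 = d := by omega
  rcases Nat.eq_zero_or_pos l with rfl | hl
  · simp [h1, h2]
    field_simp
  · obtain ⟨k, rfl⟩ : ∃ k, l = k + 1 := ⟨l - 1, by omega⟩
    have hk : (k : ℝ) + 1 ≠ 0 := by positivity
    by_cases hkd : k = d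
    · simp [h1, h2, hkd]
      field_simp
    · simp [h1, h2, hkd, hk]

lemma testFun_of_ne {d j : ℕ} (hd : 2 ≤ d) (hj : j ≠ d) (l : ℕ) :
    testFun d j l ≤ 0 ∧ -((d : ℝ) + 1) ≤ testFun d j l ∧ (l = d → testFun d j l = 0) := by
  have hd2 : (2 : ℝ) ≤ d := by exact_mod_cast hd
  unfold testFun edgeRate
  by_cases h1 : j = d + 1
  · subst h1
    have h2 : ¬ (d + 1 + 1 = d) := by omega
    by_cases hl : l = d
    · have h3 : ¬ (d + 1 = d) := by omega
      simp only [hl, h2, h3, add_tsub_cancel_right, ne_eq, not_true_eq_false, and_false,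
        false_and, if_false, mul_zero, sub_zero]
      exact ⟨le_rfl, by linarith, by simp⟩
    · have e : (1 : ℝ) / ((l : ℝ) + 1) ≤ 1 := by
        rw [div_le_one (by positivity)]
        have : (0 : ℝ) ≤ l := by positivity
        linarith
      have e0 : (0 : ℝ) ≤ 1 / ((l : ℝ) + 1) := by positivity
      simp only [hj, hl, h2, add_tsub_cancel_right, false_and, if_false, mul_zero, zero_sub,
        ne_eq, not_false_eq_true, and_self, if_true, Nat.cast_add, Nat.cast_one]
      refine ⟨by nlinarith, by nlinarith, False.elim⟩
  · by_cases h2 : j + 1 = d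
    · have h3 : ¬ (j - 1 = d) := by omega
      have h4 : ¬ (j - 1 + 1 = d) := by omega
      simp only [hj, h2, h3, h4, false_and, if_false, true_and, mul_zero, sub_zero]
      by_cases hl : l - 1 = 0 ∨ l - 1 = d + 1
      · have hl2 : (l : ℝ) ≤ d + 2 := by
          have : l ≤ d + 2 := by omega
          exact_mod_cast this
        have hl0 : (0 : ℝ) ≤ l := by positivity
        rw [if_pos hl]
        have e : (l : ℝ) * (-1 / d) = -(l / d) := by ring
        have e2 : (l : ℝ) / d ≤ d + 1 := by
          rw [div_le_iff₀ (by positivity)]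
          nlinarith
        have e3 : (0 : ℝ) ≤ l / d := by positivity
        rw [e]
        refine ⟨by linarith, by linarith, fun h => ?_⟩
        omega
      · rw [if_neg hl]
        simp
        linarith
    · have h3 : ¬ (j - 1 = d) := by omega
      by_cases h4 : j - 1 + 1 = d
      · have : j = 0 := by omega
        subst this
        simp [hj, h2]
        linarith
      · simp [hj, h2, h3, h4]
        linarith

lemma testFun_sq_le {d : ℕ} (hd : 2 ≤ d) (j l : ℕ) :
    testFun d j l ^ 2 ≤ (d + 1) * (2 * (if j = d then 1 else 0) - testFun d j l) := by
  have hd0 : (0 : ℝ) ≤ d := by positivity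
  by_cases hj : j = d
  · subst hj
    rw [testFun_self hd, if_pos rfl]
    linarith
  · obtain ⟨h1, h2, -⟩ := testFun_of_ne hd hj l
    rw [if_neg hj]
    nlinarith

lemma le_mul_testFun {d : ℕ} (hd : 2 ≤ d) (j l : ℕ) :
    (if j = d then (1 : ℝ) else 0)
      ≤ ((if j = d then 1 else 0) + (if l = d then 1 else 0)) * testFun d j l := by
  by_cases hj : j = d
  · subst hj
    rw [testFun_self hd, if_pos rfl]
    split_ifs <;> norm_num
  · obtain ⟨-, -, h⟩ := testFun_of_ne hd hj l
    by_cases hl : l = d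
    · simp [hj, h hl]
    · simp [hj, hl]

section Sums

variable {n m : ℕ}

/-- The indicator that urn `e` holds exactly `d` balls. -/
def ind (d : ℕ) (ω : Fin n → Fin m) (e : Fin m) : ℝ := if ballCount ω e = d then 1 else 0

lemma urnCount_eq_sum (d : ℕ) (ω : Fin n → Fin m) : (urnCount d ω : ℝ) = ∑ e, ind d ω e := by
  simp [urnCount, ind]

lemma ballCount_comp (π : Equiv.Perm (Fin m)) (ω : Fin n → Fin m) (e : Fin m) :
    ballCount (π ∘ ω) (π e) = ballCount ω e := by
  simp [ballCount]

lemma sum_ind_eq (d : ℕ) (a b : Fin m) :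
    ∑ ω : Fin n → Fin m, ind d ω a = ∑ ω : Fin n → Fin m, ind d ω b := by
  rw [← Equiv.sum_comp (Equiv.arrowCongr (Equiv.refl (Fin n)) (Equiv.swap a b))
    (fun ω => ind d ω b)]
  refine Finset.sum_congr rfl fun ω _ => ?_
  have h := ballCount_comp (Equiv.swap a b) ω a
  rw [Equiv.swap_apply_left] at h
  simp only [ind]
  rw [← h]
  rfl

lemma sum_mul_testFun_eq_zero (d : ℕ) {a b : Fin m} (hab : a ≠ b) (F : (Fin n → Fin m) → ℝ)
    (hF : ∀ β ω, F (flip a b β ω) = F ω) :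
    ∑ ω, F ω * testFun d (ballCount ω a) (ballCount ω b) = 0 := by
  simp only [testFun, mul_sub, Finset.sum_sub_distrib]
  rw [sum_exchange hab F hF, sub_self]

/-- The first urn of pair `i`. -/
def evenUrn (i : Fin (m / 2)) : Fin m := ⟨2 * i, by omega⟩

/-- The second urn of pair `i`. -/
def oddUrn (i : Fin (m / 2)) : Fin m := ⟨2 * i + 1, by omega⟩

lemma evenUrn_ne_oddUrn (i j : Fin (m / 2)) : evenUrn i ≠ oddUrn j := by
  simp only [evenUrn, oddUrn, ne_eq, Fin.mk.injEq]
  omega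

lemma evenUrn_ne {i j : Fin (m / 2)} (h : i ≠ j) : evenUrn i ≠ evenUrn j := by
  simp only [evenUrn, ne_eq, Fin.mk.injEq]
  omega

lemma oddUrn_ne {i j : Fin (m / 2)} (h : i ≠ j) : oddUrn i ≠ oddUrn j := by
  simp only [oddUrn, ne_eq, Fin.mk.injEq]
  omega

/-- The test function evaluated at pair `i`. -/
noncomputable def pairTest (d : ℕ) (i : Fin (m / 2)) (ω : Fin n → Fin m) : ℝ :=
  testFun d (ballCount ω (evenUrn i)) (ballCount ω (oddUrn i))

lemma sum_pairTest (d : ℕ) (i : Fin (m / 2)) :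
    ∑ ω : Fin n → Fin m, pairTest d i ω = 0 := by
  simpa [pairTest] using
    sum_mul_testFun_eq_zero (n := n) d (evenUrn_ne_oddUrn i i) (fun _ => 1) (fun _ _ => rfl)

lemma sum_pairTest_mul_pairTest (d : ℕ) {i j : Fin (m / 2)} (h : i ≠ j) :
    ∑ ω : Fin n → Fin m, pairTest d i ω * pairTest d j ω = 0 := by
  refine sum_mul_testFun_eq_zero (n := n) d (evenUrn_ne_oddUrn j j) (pairTest d i) fun β ω => ?_
  simp only [pairTest]
  rw [ballCount_flip_of_ne (evenUrn_ne h) (evenUrn_ne_oddUrn i j),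
    ballCount_flip_of_ne (evenUrn_ne_oddUrn j i).symm (oddUrn_ne h)]

lemma sum_pairTest_sq_le {d : ℕ} (hd : 2 ≤ d) (i : Fin (m / 2)) :
    ∑ ω : Fin n → Fin m, pairTest d i ω * pairTest d i ω
      ≤ 2 * (d + 1) * ∑ ω : Fin n → Fin m, ind d ω (evenUrn i) := by
  calc ∑ ω : Fin n → Fin m, pairTest d i ω * pairTest d i ω
      ≤ ∑ ω : Fin n → Fin m, (d + 1) * (2 * ind d ω (evenUrn i) - pairTest d i ω) := by
        refine Finset.sum_le_sum fun ω _ => ?_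
        rw [← sq]
        exact testFun_sq_le hd _ _
    _ = _ := by
        rw [← Finset.mul_sum, Finset.sum_sub_distrib, sum_pairTest, ← Finset.mul_sum]
        ring

lemma le_sum_urnCount_mul_pairTest {d : ℕ} (hd : 2 ≤ d) (i : Fin (m / 2)) :
    ∑ ω : Fin n → Fin m, ind d ω (evenUrn i)
      ≤ ∑ ω : Fin n → Fin m, (urnCount d ω : ℝ) * pairTest d i ω := by
  have hne := evenUrn_ne_oddUrn i i
  set s : Finset (Fin m) := {evenUrn i, oddUrn i} with hs
  have hsplit : ∀ ω : Fin n → Fin m, (urnCount d ω : ℝ)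
      = ∑ e ∈ sᶜ, ind d ω e + (ind d ω (evenUrn i) + ind d ω (oddUrn i)) := by
    intro ω
    rw [urnCount_eq_sum, ← Finset.sum_compl_add_sum s, hs, Finset.sum_pair hne]
  have h0 := sum_mul_testFun_eq_zero (n := n) d hne (fun ω => ∑ e ∈ sᶜ, ind d ω e) (by
    intro β ω
    refine Finset.sum_congr rfl fun e he => ?_
    simp only [hs, Finset.mem_compl, Finset.mem_insert, Finset.mem_singleton, not_or] at he
    simp only [ind]
    rw [ballCount_flip_of_ne he.1 he.2])
  simp only [hsplit, add_mul _ _ (pairTest d i _), Finset.sum_add_distrib]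
  change _ ≤ ∑ ω : Fin n → Fin m, (∑ e ∈ sᶜ, ind d ω e)
    * testFun d (ballCount ω (evenUrn i)) (ballCount ω (oddUrn i)) + _
  rw [h0, zero_add]
  simp only [← Finset.sum_add_distrib, ← add_mul]
  exact Finset.sum_le_sum fun ω _ => le_mul_testFun hd _ _

/-- The sum of the test functions over all pairs. -/
noncomputable def totalTest (d : ℕ) (ω : Fin n → Fin m) : ℝ := ∑ i, pairTest d i ω

lemma sum_totalTest (d : ℕ) : ∑ ω : Fin n → Fin m, totalTest d ω = 0 := by
  simp only [totalTest]
  rw [Finset.sum_comm]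
  exact Finset.sum_eq_zero fun i _ => sum_pairTest d i

lemma sum_totalTest_sq_le {d : ℕ} (hd : 2 ≤ d) (a : Fin m) :
    ∑ ω : Fin n → Fin m, totalTest d ω ^ 2
      ≤ (m / 2 : ℕ) * (2 * (d + 1) * ∑ ω : Fin n → Fin m, ind d ω a) := by
  calc ∑ ω : Fin n → Fin m, totalTest d ω ^ 2
      = ∑ i, ∑ j, ∑ ω : Fin n → Fin m, pairTest d i ω * pairTest d j ω := by
        simp only [totalTest, sq, Finset.sum_mul_sum]
        rw [Finset.sum_comm]
        refine Finset.sum_congr rfl fun i _ => ?_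
        rw [Finset.sum_comm]
    _ = ∑ i, ∑ ω : Fin n → Fin m, pairTest d i ω * pairTest d i ω := by
        refine Finset.sum_congr rfl fun i _ => ?_
        exact Finset.sum_eq_single i
          (fun j _ hj => sum_pairTest_mul_pairTest d hj.symm) (by simp)
    _ ≤ ∑ _i : Fin (m / 2), 2 * (d + 1) * ∑ ω : Fin n → Fin m, ind d ω a := by
        refine Finset.sum_le_sum fun i _ => ?_
        rw [sum_ind_eq d a (evenUrn i)]
        exact sum_pairTest_sq_le hd i
    _ = _ := by simp

lemma le_sum_urnCount_mul_totalTest {d : ℕ} (hd : 2 ≤ d) (a : Fin m) :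
    (m / 2 : ℕ) * ∑ ω : Fin n → Fin m, ind d ω a
      ≤ ∑ ω : Fin n → Fin m, (urnCount d ω : ℝ) * totalTest d ω := by
  calc (m / 2 : ℕ) * ∑ ω : Fin n → Fin m, ind d ω a
      = ∑ _i : Fin (m / 2), ∑ ω : Fin n → Fin m, ind d ω a := by simp
    _ ≤ ∑ i, ∑ ω : Fin n → Fin m, (urnCount d ω : ℝ) * pairTest d i ω := by
        refine Finset.sum_le_sum fun i _ => ?_
        rw [sum_ind_eq d a (evenUrn i)]
        exact le_sum_urnCount_mul_pairTest hd i
    _ = _ := by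
        rw [Finset.sum_comm]
        simp only [totalTest, Finset.mul_sum]

lemma sum_urnCount (d : ℕ) (a : Fin m) :
    ∑ ω : Fin n → Fin m, (urnCount d ω : ℝ) = m * ∑ ω : Fin n → Fin m, ind d ω a := by
  simp only [urnCount_eq_sum]
  rw [Finset.sum_comm]
  simp [fun e => sum_ind_eq (n := n) d e a]

/-- The sum of squared deviations of `urnCount` from any constant dominates its sum. -/
lemma sum_urnCount_le_sum_sq {d : ℕ} (hd : 2 ≤ d) (hm : 2 ≤ m) (c : ℝ) :
    ∑ ω : Fin n → Fin m, (urnCount d ω : ℝ)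
      ≤ 6 * (d + 1) * ∑ ω : Fin n → Fin m, ((urnCount d ω : ℝ) - c) ^ 2 := by
  let a : Fin m := ⟨0, by omega⟩
  set S := ∑ ω : Fin n → Fin m, ind d ω a with hS
  set t : ℝ := 2 * (d + 1) with ht
  have htpos : 0 < t := by positivity
  have hS0 : 0 ≤ S := Finset.sum_nonneg fun ω _ => by unfold ind; split_ifs <;> norm_num
  have h1 := le_sum_urnCount_mul_totalTest (n := n) hd a
  have h2 := sum_totalTest_sq_le (n := n) hd a
  have h3 : 0 ≤ ∑ ω : Fin n → Fin m, (t * ((urnCount d ω : ℝ) - c) - totalTest d ω) ^ 2 :=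
    Finset.sum_nonneg fun ω _ => sq_nonneg _
  have h4 : ∑ ω : Fin n → Fin m, (t * ((urnCount d ω : ℝ) - c) - totalTest d ω) ^ 2
      = t ^ 2 * ∑ ω : Fin n → Fin m, ((urnCount d ω : ℝ) - c) ^ 2
        - 2 * t * ∑ ω : Fin n → Fin m, (urnCount d ω : ℝ) * totalTest d ω
        + 2 * t * c * ∑ ω : Fin n → Fin m, totalTest d ω
        + ∑ ω : Fin n → Fin m, totalTest d ω ^ 2 := by
    simp only [Finset.mul_sum, ← Finset.sum_sub_distrib, ← Finset.sum_add_distrib]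
    exact Finset.sum_congr rfl fun ω _ => by ring
  rw [h4, sum_totalTest] at h3
  rw [sum_urnCount d a, ← hS]
  rw [← hS] at h1 h2
  have hm3 : (m : ℝ) ≤ 3 * (m / 2 : ℕ) := by
    have : m ≤ 3 * (m / 2) := by omega
    exact_mod_cast this
  set V := ∑ ω : Fin n → Fin m, ((urnCount d ω : ℝ) - c) ^ 2
  have h5 : t * ((m / 2 : ℕ) * S) ≤ t * (t * V) := by nlinarith
  have h6 := le_of_mul_le_mul_left h5 htpos
  calc (m : ℝ) * S ≤ 3 * (m / 2 : ℕ) * S := by gcongr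
    _ ≤ 3 * (t * V) := by linarith
    _ = _ := by rw [ht]; ring

end Sums

section Probability

variable {n m : ℕ}

lemma integral_occ (f : (Fin n → Fin m) → ℝ) :
    ∫ ω, f ω ∂(occ n m) = ((m : ℝ) ^ n)⁻¹ * ∑ ω, f ω := by
  rw [occ, integral_smul_measure, integral_fintype (Integrable.of_finite)]
  simp [Measure.real]

lemma isProbabilityMeasure_occ (hm : 2 ≤ m) : IsProbabilityMeasure (occ n m) := by
  constructor
  simp only [occ, Measure.smul_apply, smul_eq_mul, Measure.count_univ,
    ENat.card_eq_coe_fintype_card]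
  have h0 : Fintype.card (Fin n → Fin m) ≠ 0 := by
    simp; omega
  refine ENNReal.inv_mul_cancel ?_ ?_
  · exact_mod_cast h0
  · simp

lemma occMean_le_occVar {d : ℕ} (hd : 2 ≤ d) (hm : 2 ≤ m) :
    occMean d n m ≤ 6 * (d + 1) * occVar d n m := by
  have hX : AEMeasurable (fun ω : Fin n → Fin m => (urnCount d ω : ℝ)) (occ n m) :=
    (measurable_of_finite _).aemeasurable
  rw [occVar, variance_eq_integral hX, occMean, integral_occ, integral_occ]
  have h := sum_urnCount_le_sum_sq (n := n) hd hm
    (((m : ℝ) ^ n)⁻¹ * ∑ ω : Fin n → Fin m, (urnCount d ω : ℝ))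
  calc _ ≤ ((m : ℝ) ^ n)⁻¹ * _ := mul_le_mul_of_nonneg_left h (by positivity)
    _ = _ := by ring

lemma occVar_le_sum_sq (d : ℕ) (hm : 2 ≤ m) :
    occVar d n m ≤ ((m : ℝ) ^ n)⁻¹ * ∑ ω : Fin n → Fin m, (urnCount d ω : ℝ) ^ 2 := by
  have := isProbabilityMeasure_occ (n := n) hm
  rw [← integral_occ, occVar]
  exact variance_le_expectation_sq (measurable_of_finite _).aestronglyMeasurable

lemma occVar_le_sq_of_urnCount_le {d : ℕ} (hm : 2 ≤ m) {k : ℕ}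
    (h : ∀ ω : Fin n → Fin m, urnCount d ω ≤ k) : occVar d n m ≤ (k : ℝ) ^ 2 := by
  refine (occVar_le_sum_sq d hm).trans ?_
  have hpos : (0 : ℝ) < (m : ℝ) ^ n := by
    have : (0 : ℝ) < m := by exact_mod_cast (by omega : 0 < m)
    positivity
  rw [inv_mul_le_iff₀ hpos]
  calc ∑ ω : Fin n → Fin m, (urnCount d ω : ℝ) ^ 2
      ≤ ∑ _ω : Fin n → Fin m, (k : ℝ) ^ 2 := by
        refine Finset.sum_le_sum fun ω _ => ?_
        have : (urnCount d ω : ℝ) ≤ k := by exact_mod_cast h ω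
        gcongr
    _ = _ := by simp

lemma urnCount_le_urns (d : ℕ) (ω : Fin n → Fin m) : urnCount d ω ≤ m :=
  (Finset.card_filter_le _ _).trans (by simp)

lemma urnCount_le_balls {d : ℕ} (hd : 2 ≤ d) (ω : Fin n → Fin m) : urnCount d ω ≤ n := by
  have h : ∑ e, ballCount ω e = n := by
    simpa [ballCount] using
      (Finset.card_eq_sum_card_fiberwise (f := ω) (s := Finset.univ) (t := Finset.univ)
        (by simp)).symm
  rw [urnCount, Finset.card_filter]
  calc _ ≤ ∑ e, ballCount ω e := by
        refine Finset.sum_le_sum fun e _ => ?_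
        split_ifs <;> omega
    _ = n := h

lemma sum_pow_ballCount_mul (θ : ℝ) (a b : Fin m) :
    ∑ ω : Fin n → Fin m, θ ^ ballCount ω a * θ ^ ballCount ω b
      = (∑ e : Fin m, (if e = a then θ else 1) * (if e = b then θ else 1)) ^ n := by
  have h : ∀ (ω : Fin n → Fin m) (a : Fin m),
      θ ^ ballCount ω a = ∏ β, (if ω β = a then θ else 1) := by
    intro ω a
    rw [Finset.prod_ite]
    simp [ballCount]
  simp only [h, ← Finset.prod_mul_distrib]
  rw [Fintype.sum_pow]

lemma sum_pow_ballCount_mul_of_ne (θ : ℝ) {a b : Fin m} (hab : a ≠ b) :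
    ∑ ω : Fin n → Fin m, θ ^ ballCount ω a * θ ^ ballCount ω b
      = ((m : ℝ) - 2 * (1 - θ)) ^ n := by
  rw [sum_pow_ballCount_mul]
  congr 1
  have : ∀ e : Fin m, (if e = a then θ else 1) * (if e = b then θ else 1)
      = 1 - (if e = a then 1 - θ else 0) - (if e = b then 1 - θ else 0) := by
    intro e
    by_cases h1 : e = a
    · subst h1; simp [hab]
    · rw [if_neg h1, if_neg h1]
      split_ifs <;> ring
  simp only [this, Finset.sum_sub_distrib]
  simp
  ring

lemma sum_pow_ballCount_mul_self_le {θ : ℝ} (h0 : 0 ≤ θ) (h1 : θ ≤ 1) (a : Fin m) :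
    ∑ ω : Fin n → Fin m, θ ^ ballCount ω a * θ ^ ballCount ω a
      ≤ ((m : ℝ) - (1 - θ)) ^ n := by
  rw [sum_pow_ballCount_mul]
  have e : ∀ e : Fin m, (if e = a then θ else 1) * (if e = a then θ else 1)
      ≤ 1 - (if e = a then 1 - θ else 0) := by
    intro e
    split_ifs <;> nlinarith
  refine pow_le_pow_left₀ (Finset.sum_nonneg fun e _ => ?_)
    ((Finset.sum_le_sum fun i _ => e i).trans_eq ?_) n
  · split_ifs <;> positivity
  · simp

lemma sub_pow_le {s : ℝ} (hs : s ≤ m) (hm : 2 ≤ m) :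
    ((m : ℝ) - s) ^ n ≤ (m : ℝ) ^ n * Real.exp (-(s * (n / m))) := by
  have hm0 : (0 : ℝ) < m := by exact_mod_cast (by omega : 0 < m)
  have h : (m : ℝ) - s ≤ m * Real.exp (-(s / m)) := by
    have := Real.add_one_le_exp (-(s / m))
    calc (m : ℝ) - s = m * (-(s / m) + 1) := by field_simp; ring
      _ ≤ _ := by gcongr
  calc ((m : ℝ) - s) ^ n ≤ (m * Real.exp (-(s / m))) ^ n :=
        pow_le_pow_left₀ (by linarith) h n
    _ = _ := by
        rw [mul_pow, ← Real.exp_nat_mul]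
        congr 2
        ring

/-- If `n / m` exceeds `log m / (1 - θ)`, then the variance is bounded. -/
lemma occVar_le_of_log_le (d : ℕ) (hm : 2 ≤ m) {θ : ℝ} (h0 : 0 < θ) (h1 : θ ≤ 1)
    (h : Real.log m ≤ (1 - θ) * (n / m)) : occVar d n m ≤ 2 * ((θ ^ d)⁻¹) ^ 2 := by
  have hm2 : (2 : ℝ) ≤ m := by exact_mod_cast hm
  have hm0 : (0 : ℝ) < m := by linarith
  have hpos : (0 : ℝ) < (m : ℝ) ^ n := by positivity
  refine (occVar_le_sum_sq d hm).trans ?_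
  rw [inv_mul_le_iff₀ hpos]
  set E := Real.exp (-((1 - θ) * (n / m))) with hE
  have hE1 : m * E ≤ 1 := by
    calc m * E ≤ m * Real.exp (-Real.log m) := by
          rw [hE]; gcongr
      _ = 1 := by rw [Real.exp_neg, Real.exp_log hm0]; field_simp
  have hE0 : 0 < E := Real.exp_pos _
  have hind : ∀ (ω : Fin n → Fin m) (e : Fin m), ind d ω e ≤ (θ ^ d)⁻¹ * θ ^ ballCount ω e := by
    intro ω e
    unfold ind
    split_ifs with he
    · rw [he, inv_mul_cancel₀ (by positivity)]
    · positivity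
  have hpair : ∀ a b : Fin m, ∑ ω : Fin n → Fin m, θ ^ ballCount ω a * θ ^ ballCount ω b
      ≤ (m : ℝ) ^ n * (E ^ 2 + if a = b then E else 0) := by
    intro a b
    by_cases hab : a = b
    · subst hab
      rw [if_pos rfl]
      refine (sum_pow_ballCount_mul_self_le h0.le h1 a).trans
        ((sub_pow_le (by linarith) hm).trans ?_)
      rw [← hE]
      gcongr
      nlinarith
    · rw [if_neg hab, add_zero, sum_pow_ballCount_mul_of_ne θ hab]
      refine (sub_pow_le (by linarith) hm).trans_eq ?_
      rw [hE, ← Real.exp_nat_mul]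
      congr 2
      push_cast
      ring
  calc ∑ ω : Fin n → Fin m, (urnCount d ω : ℝ) ^ 2
      ≤ ∑ ω : Fin n → Fin m, ((θ ^ d)⁻¹ * ∑ e, θ ^ ballCount ω e) ^ 2 := by
        refine Finset.sum_le_sum fun ω _ => ?_
        refine pow_le_pow_left₀ (by positivity) ?_ 2
        rw [urnCount_eq_sum, Finset.mul_sum]
        exact Finset.sum_le_sum fun e _ => hind ω e
    _ = ((θ ^ d)⁻¹) ^ 2 *
          ∑ a, ∑ b, ∑ ω : Fin n → Fin m, θ ^ ballCount ω a * θ ^ ballCount ω b := by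
        simp only [mul_pow, ← Finset.mul_sum]
        congr 1
        simp only [sq, Finset.sum_mul_sum]
        rw [Finset.sum_comm]
        refine Finset.sum_congr rfl fun i _ => ?_
        rw [Finset.sum_comm]
    _ ≤ ((θ ^ d)⁻¹) ^ 2 *
          ∑ a : Fin m, ∑ b : Fin m, (m : ℝ) ^ n * (E ^ 2 + if a = b then E else 0) := by
        gcongr with a _ b _
        exact hpair a b
    _ = ((θ ^ d)⁻¹) ^ 2 * ((m : ℝ) ^ n * ((m * E) ^ 2 + m * E)) := by
        simp only [← Finset.mul_sum, Finset.sum_add_distrib]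
        simp only [Finset.sum_const, Finset.card_univ, Fintype.card_fin, nsmul_eq_mul,
          Finset.sum_ite_eq, Finset.mem_univ, if_true]
        ring
    _ ≤ ((θ ^ d)⁻¹) ^ 2 * ((m : ℝ) ^ n * 2) := by
        have : (m * E) ^ 2 + m * E ≤ 2 := by nlinarith [mul_pos hm0 hE0]
        gcongr
    _ = _ := by ring

end Probability

end Occupancy

open Occupancy

/-- Lemma 3.2, Part 4: for `d ≥ 2`, given any `n*`, `m*` and `ε > 0` there are
constants `r₁` and `C` such that all `n ≥ d`, `m ≥ 2` with `σ²_{n,m} ≥ r₁` satisfy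
(a) `n > n*` and `m > m*`; (b) `n/m ≤ (1+ε) log m`; (c) `μ_{n,m} ≤ C·σ²_{n,m}`. -/
theorem occupancy_large_variance (d : ℕ) (hd : 2 ≤ d) (nstar mstar : ℕ)
    (ε : ℝ) (hε : 0 < ε) :
    ∃ r₁ C : ℝ, ∀ n m : ℕ, d ≤ n → 2 ≤ m → r₁ ≤ occVar d n m →
      nstar < n ∧ mstar < m ∧ (n : ℝ) / m ≤ (1 + ε) * Real.log m ∧
        occMean d n m ≤ C * occVar d n m := by
  set θ : ℝ := ε / (1 + ε) with hθ
  have hθ0 : 0 < θ := by positivity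
  have hθ1 : 1 - θ = 1 / (1 + ε) := by rw [hθ]; field_simp; ring
  refine ⟨(nstar : ℝ) ^ 2 + (mstar : ℝ) ^ 2 + 2 * ((θ ^ d)⁻¹) ^ 2 + 1, 6 * (d + 1),
    fun n m _ hm hr => ⟨?_, ?_, ?_, occMean_le_occVar hd hm⟩⟩
  · by_contra! hn
    have h := occVar_le_sq_of_urnCount_le hm fun ω : Fin n → Fin m => urnCount_le_balls hd ω
    have h' : (n : ℝ) ^ 2 ≤ (nstar : ℝ) ^ 2 := by gcongr
    have : 0 ≤ (mstar : ℝ) ^ 2 + 2 * ((θ ^ d)⁻¹) ^ 2 := by positivity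
    linarith
  · by_contra! hn
    have h := occVar_le_sq_of_urnCount_le hm fun ω : Fin n → Fin m => urnCount_le_urns d ω
    have h' : (m : ℝ) ^ 2 ≤ (mstar : ℝ) ^ 2 := by gcongr
    have : 0 ≤ (nstar : ℝ) ^ 2 + 2 * ((θ ^ d)⁻¹) ^ 2 := by positivity
    linarith
  · by_contra! hn
    have hθle : θ ≤ 1 := by
      have : 0 < 1 - θ := by rw [hθ1]; positivity
      linarith
    have h := occVar_le_of_log_le (n := n) d hm hθ0 hθle (by
      rw [hθ1, one_div, ← div_eq_inv_mul, le_div_iff₀ (by positivity)]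
      linarith)
    have : 0 ≤ (nstar : ℝ) ^ 2 + (mstar : ℝ) ^ 2 := by positivity
    linarith
end
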